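/- Every zero-sum repeated game with an informed controller Γ(π) = (K, I, J, C, D, q, g, π) has a general uniform value: there exists v*(π) ∈ ℝ such that (i) v_θ(π) → v*(π) as I(θ) → 0, and (ii) for every ε > 0 there exist α > 0 and strategies σ* of player 1 and τ* of player 2 such that for every evaluation θ with I(θ) ≤ α: γ_θ(π, σ*, τ) ≥ v*(π) − ε for every strategy τ of player 2, and γ_θ(π, σ, τ*) ≤ v*(π) + ε for every strategy σ of player 1. -/

import Mathlib

open Set

namespace Stmt19

variable {K I J C D : Type*} [Fintype K] [Fintype I] [Fintype J] [Fintype C] [Fintype D]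

/-- The simplex of probability vectors on a finite set `T`. -/
def Δ (T : Type*) [Fintype T] : Set (T → ℝ) := {p | (∀ t, 0 ≤ p t) ∧ ∑ t, p t = 1}

/-- Behavioral strategies of player 1: `σ_t : (C×I)^{t−1} × C → Δ(I)`. -/
def IsStrat1 (σ : List (C × I) → C → (I → ℝ)) : Prop :=
  ∀ h c, σ h c ∈ Δ I

/-- Behavioral strategies of player 2: `τ_t : (D×J)^{t−1} × D → Δ(J)`. -/
def IsStrat2 (τ : List (D × J) → D → (J → ℝ)) : Prop :=
  ∀ h d, τ h d ∈ Δ J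

/-- The (finitely supported) joint distribution at time `t` of (current state, player 1's
past signals/actions and current signal, player 2's past signals/actions and current
signal), under `(π,σ,τ)`. -/
noncomputable def hist (q : K → I → J → (K × C × D → ℝ)) (π : K × C × D → ℝ)
    (σ : List (C × I) → C → (I → ℝ)) (τ : List (D × J) → D → (J → ℝ)) :
    ℕ → (K × (List (C × I) × C) × (List (D × J) × D) →₀ ℝ)
  | 0 => ∑ x : K × C × D,
      Finsupp.single (x.1, (([] : List (C × I)), x.2.1), (([] : List (D × J)), x.2.2)) (π x)
  | t + 1 => (hist q π σ τ t).sum fun st w =>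
      ∑ i, ∑ j, ∑ y : K × C × D,
        Finsupp.single
          (y.1, (st.2.1.1 ++ [(st.2.1.2, i)], y.2.1), (st.2.2.1 ++ [(st.2.2.2, j)], y.2.2))
          (w * σ st.2.1.1 st.2.1.2 i * τ st.2.2.1 st.2.2.2 j * q st.1 i j y)

/-- The expected payoff `E_{π,σ,τ}(g(k_{t+1}, i_{t+1}, j_{t+1}))` at stage `t+1`. -/
noncomputable def stagePay (q : K → I → J → (K × C × D → ℝ)) (g : K → I → J → ℝ)
    (π : K × C × D → ℝ) (σ : List (C × I) → C → (I → ℝ))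
    (τ : List (D × J) → D → (J → ℝ)) (t : ℕ) : ℝ :=
  (hist q π σ τ t).sum fun st w =>
    ∑ i, ∑ j, w * σ st.2.1.1 st.2.1.2 i * τ st.2.2.1 st.2.2.2 j * g st.1 i j

/-- An evaluation: a probability distribution `θ = (θ_t)_{t ≥ 1}` over stages
(indexed here by `t : ℕ`, `t` standing for stage `t+1`). -/
def IsEval (θ : ℕ → ℝ) : Prop := (∀ t, 0 ≤ θ t) ∧ ∑' t, θ t = 1

/-- The impatience `I(θ) = Σ_{t≥1} |θ_{t+1} − θ_t|`. -/
noncomputable def impatience (θ : ℕ → ℝ) : ℝ := ∑' t, |θ (t + 1) - θ t|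

/-- The `θ`-payoff `γ_θ(π,σ,τ) = E_{π,σ,τ}(Σ_t θ_t g(k_t,i_t,j_t))`. -/
noncomputable def payoff (q : K → I → J → (K × C × D → ℝ)) (g : K → I → J → ℝ)
    (π : K × C × D → ℝ) (θ : ℕ → ℝ) (σ : List (C × I) → C → (I → ℝ))
    (τ : List (D × J) → D → (J → ℝ)) : ℝ :=
  ∑' t, θ t * stagePay q g π σ τ t

/-- The lower value `max_σ min_τ γ_θ(π,σ,τ)`. -/
noncomputable def lowVal (q : K → I → J → (K × C × D → ℝ)) (g : K → I → J → ℝ)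
    (π : K × C × D → ℝ) (θ : ℕ → ℝ) : ℝ :=
  sSup {c : ℝ | ∃ σ, IsStrat1 σ ∧
    c = sInf {r : ℝ | ∃ τ, IsStrat2 τ ∧ r = payoff q g π θ σ τ}}

/-- The upper value `min_τ max_σ γ_θ(π,σ,τ)`. -/
noncomputable def upVal (q : K → I → J → (K × C × D → ℝ)) (g : K → I → J → ℝ)
    (π : K × C × D → ℝ) (θ : ℕ → ℝ) : ℝ :=
  sInf {c : ℝ | ∃ τ, IsStrat2 τ ∧
    c = sSup {r : ℝ | ∃ σ, IsStrat1 σ ∧ r = payoff q g π θ σ τ}}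

end Stmt19

open Set
set_option linter.unusedSectionVars false
set_option linter.unusedVariables false
namespace Stmt19

/-! ### Part A: sums over words -/

/-- Sum over all words of length `t`. -/
noncomputable def SL {A : Type*} [Fintype A] : ℕ → (List A → ℝ) → ℝ
  | 0, f => f []
  | t + 1, f => ∑ a, SL t (fun h => f (a :: h))

section SLsec
variable {A : Type*} [Fintype A]

lemma SL_add (t : ℕ) (f f' : List A → ℝ) : SL t (fun h => f h + f' h) = SL t f + SL t f' := by
  induction t generalizing f f' with
  | zero => rfl
  | succ t ih => simp only [SL, ih, Finset.sum_add_distrib]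

lemma SL_mul (t : ℕ) (c : ℝ) (f : List A → ℝ) : SL t (fun h => c * f h) = c * SL t f := by
  induction t generalizing f with
  | zero => rfl
  | succ t ih => simp only [SL, ih, Finset.mul_sum]

lemma SL_zero (t : ℕ) : SL t (fun _ : List A => 0) = 0 := by
  have := SL_mul t 0 (fun _ : List A => 0); simpa using this

lemma SL_mono_len (t : ℕ) (f f' : List A → ℝ) (h : ∀ l, l.length = t → f l ≤ f' l) :
    SL t f ≤ SL t f' := by
  induction t generalizing f f' with
  | zero => exact h [] rfl
  | succ t ih =>
    exact Finset.sum_le_sum fun a _ => ih _ _ fun l hl => h (a :: l) (by simp [hl])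

lemma SL_mono (t : ℕ) (f f' : List A → ℝ) (h : ∀ l, f l ≤ f' l) : SL t f ≤ SL t f' :=
  SL_mono_len t f f' fun l _ => h l

lemma SL_congr (t : ℕ) (f f' : List A → ℝ) (h : ∀ l, l.length = t → f l = f' l) :
    SL t f = SL t f' :=
  le_antisymm (SL_mono_len t _ _ fun l hl => (h l hl).le)
    (SL_mono_len t _ _ fun l hl => (h l hl).ge)

lemma SL_nonneg (t : ℕ) (f : List A → ℝ) (h : ∀ l, 0 ≤ f l) : 0 ≤ SL t f := by
  have := SL_mono t (fun _ => 0) f h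
  rwa [SL_zero] at this

lemma SL_sum {ι : Type*} (s : Finset ι) (t : ℕ) (f : ι → List A → ℝ) :
    SL t (fun h => ∑ i ∈ s, f i h) = ∑ i ∈ s, SL t (f i) := by
  classical
  induction s using Finset.induction_on with
  | empty => simp [SL_zero]
  | insert a s ha ih => simp only [Finset.sum_insert ha, SL_add, ih]

lemma SL_append (t s : ℕ) (f : List A → ℝ) :
    SL (t + s) f = SL t (fun h => SL s (fun h' => f (h ++ h'))) := by
  induction t generalizing f with
  | zero => simp [SL]
  | succ t ih =>
    rw [show t + 1 + s = (t + s) + 1 by ring]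
    simp only [SL, ih, List.cons_append]

lemma SL_snoc (t : ℕ) (f : List A → ℝ) :
    SL (t + 1) f = SL t (fun h => ∑ a, f (h ++ [a])) := by
  rw [SL_append]; rfl

lemma SL_continuous {X : Type*} [TopologicalSpace X] (t : ℕ) (f : X → List A → ℝ)
    (hf : ∀ l, Continuous (fun x => f x l)) : Continuous (fun x => SL t (f x)) := by
  induction t generalizing f with
  | zero => exact hf []
  | succ t ih => exact continuous_finsetSum _ fun a _ => ih (fun x h => f x (a :: h)) fun l => hf _

end SLsec

/-! ### Part B: flows -/

section Flow
variable {K I J D : Type*} [Fintype K] [Fintype I] [Fintype J] [Fintype D]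

/-- Payoff of `b` against the action `j`. -/
noncomputable def lin (g : K → I → J → ℝ) (b : K → I → ℝ) (j : J) : ℝ := ∑ k, ∑ i, b k i * g k i j

/-- Worst payoff of `b`. -/
noncomputable def mn [Nonempty J] (g : K → I → J → ℝ) (b : K → I → ℝ) : ℝ :=
  Finset.univ.inf' Finset.univ_nonempty (lin g b)

/-- Image of `b` under the transition, restricted to signal `d`. -/
noncomputable def push (Q : K → I → K → D → ℝ) (b : K → I → ℝ) (d : D) (k' : K) : ℝ :=
  ∑ k, ∑ i, b k i * Q k i k' d

structure IsFlow (Q : K → I → K → D → ℝ) (x : K → ℝ) (B : List D → K → I → ℝ) : Prop where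
  nonneg : ∀ h k i, 0 ≤ B h k i
  root : ∀ k, ∑ i, B [] k i = x k
  step : ∀ h d k, ∑ i, B (h ++ [d]) k i = push Q (B h) d k

/-- Stage payoff of a flow. -/
noncomputable def G [Nonempty J] (g : K → I → J → ℝ) (t : ℕ) (B : List D → K → I → ℝ) : ℝ :=
  SL t (fun h => mn g (B h))

lemma lin_add (g : K → I → J → ℝ) (b b' : K → I → ℝ) (j : J) :
    lin g (fun k i => b k i + b' k i) j = lin g b j + lin g b' j := by
  simp only [lin, add_mul, Finset.sum_add_distrib]

lemma lin_mul (g : K → I → J → ℝ) (c : ℝ) (b : K → I → ℝ) (j : J) :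
    lin g (fun k i => c * b k i) j = c * lin g b j := by
  simp only [lin, mul_assoc, Finset.mul_sum]

lemma push_add (Q : K → I → K → D → ℝ) (b b' : K → I → ℝ) (d : D) (k : K) :
    push Q (fun k i => b k i + b' k i) d k = push Q b d k + push Q b' d k := by
  simp only [push, add_mul, Finset.sum_add_distrib]

lemma push_mul (Q : K → I → K → D → ℝ) (c : ℝ) (b : K → I → ℝ) (d : D) (k : K) :
    push Q (fun k i => c * b k i) d k = c * push Q b d k := by
  simp only [push, mul_assoc, Finset.mul_sum]

lemma push_nonneg {Q : K → I → K → D → ℝ} (hQ : ∀ k i k' d, 0 ≤ Q k i k' d) {b : K → I → ℝ}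
    (hb : ∀ k i, 0 ≤ b k i) (d : D) (k : K) : 0 ≤ push Q b d k :=
  Finset.sum_nonneg fun _ _ => Finset.sum_nonneg fun _ _ => mul_nonneg (hb _ _) (hQ _ _ _ _)

lemma push_mass {Q : K → I → K → D → ℝ} (hQ1 : ∀ k i, ∑ d, ∑ k', Q k i k' d = 1)
    (b : K → I → ℝ) : ∑ d, ∑ k', push Q b d k' = ∑ k, ∑ i, b k i := by
  simp only [push]
  calc ∑ d, ∑ k', ∑ k, ∑ i, b k i * Q k i k' d
      = ∑ d, ∑ k, ∑ i, ∑ k', b k i * Q k i k' d := by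
        refine Finset.sum_congr rfl fun d _ => ?_
        rw [Finset.sum_comm]
        refine Finset.sum_congr rfl fun k _ => ?_
        rw [Finset.sum_comm]
    _ = ∑ k, ∑ i, ∑ d, ∑ k', b k i * Q k i k' d := by
        rw [Finset.sum_comm]
        refine Finset.sum_congr rfl fun k _ => ?_
        rw [Finset.sum_comm]
    _ = _ := by simp only [← Finset.mul_sum, hQ1, mul_one]

lemma lin_nonneg {g : K → I → J → ℝ} (hg : ∀ k i j, g k i j ∈ Icc (0:ℝ) 1) {b : K → I → ℝ}
    (hb : ∀ k i, 0 ≤ b k i) (j : J) : 0 ≤ lin g b j :=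
  Finset.sum_nonneg fun _ _ => Finset.sum_nonneg fun _ _ => mul_nonneg (hb _ _) (hg _ _ _).1

lemma lin_le {g : K → I → J → ℝ} (hg : ∀ k i j, g k i j ∈ Icc (0:ℝ) 1) {b : K → I → ℝ}
    (hb : ∀ k i, 0 ≤ b k i) (j : J) : lin g b j ≤ ∑ k, ∑ i, b k i :=
  Finset.sum_le_sum fun _ _ => Finset.sum_le_sum fun _ _ =>
    mul_le_of_le_one_right (hb _ _) (hg _ _ _).2

variable [Nonempty J]

lemma mn_le (g : K → I → J → ℝ) (b : K → I → ℝ) (j : J) : mn g b ≤ lin g b j :=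
  Finset.inf'_le _ (Finset.mem_univ j)

lemma le_mn {g : K → I → J → ℝ} {b : K → I → ℝ} {c : ℝ} (h : ∀ j, c ≤ lin g b j) : c ≤ mn g b :=
  Finset.le_inf' _ _ fun j _ => h j

lemma exists_mn (g : K → I → J → ℝ) (b : K → I → ℝ) : ∃ j, mn g b = lin g b j := by
  obtain ⟨j, -, hj⟩ := Finset.exists_mem_eq_inf' (Finset.univ_nonempty (α := J)) (lin g b)
  exact ⟨j, hj⟩

lemma mn_add (g : K → I → J → ℝ) (b b' : K → I → ℝ) :
    mn g b + mn g b' ≤ mn g (fun k i => b k i + b' k i) :=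
  le_mn fun j => by rw [lin_add]; exact add_le_add (mn_le _ _ _) (mn_le _ _ _)

lemma mn_mul (g : K → I → J → ℝ) {c : ℝ} (hc : 0 ≤ c) (b : K → I → ℝ) :
    c * mn g b ≤ mn g (fun k i => c * b k i) :=
  le_mn fun j => by rw [lin_mul]; exact mul_le_mul_of_nonneg_left (mn_le _ _ _) hc

lemma mn_nonneg {g : K → I → J → ℝ} (hg : ∀ k i j, g k i j ∈ Icc (0:ℝ) 1) {b : K → I → ℝ}
    (hb : ∀ k i, 0 ≤ b k i) : 0 ≤ mn g b := le_mn fun j => lin_nonneg hg hb j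

lemma mn_le_mass {g : K → I → J → ℝ} (hg : ∀ k i j, g k i j ∈ Icc (0:ℝ) 1) {b : K → I → ℝ}
    (hb : ∀ k i, 0 ≤ b k i) : mn g b ≤ ∑ k, ∑ i, b k i :=
  (mn_le _ _ (Classical.arbitrary J)).trans (lin_le hg hb _)

lemma mn_continuous (g : K → I → J → ℝ) : Continuous (mn g) := by
  unfold mn
  refine Continuous.finset_inf'_apply _ fun j _ => ?_
  unfold lin
  fun_prop

lemma IsFlow.tail {Q : K → I → K → D → ℝ} {x : K → ℝ} {B : List D → K → I → ℝ}
    (hB : IsFlow Q x B) (d : D) : IsFlow Q (push Q (B []) d) (fun h => B (d :: h)) where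
  nonneg h k i := hB.nonneg _ _ _
  root k := hB.step [] d k
  step h d' k := hB.step (d :: h) d' k

lemma IsFlow.shift {Q : K → I → K → D → ℝ} {x : K → ℝ} {B : List D → K → I → ℝ}
    (hB : IsFlow Q x B) (l : List D) :
    IsFlow Q (fun k => ∑ i, B l k i) (fun h => B (l ++ h)) where
  nonneg h k i := hB.nonneg _ _ _
  root k := by simp
  step h d' k := by rw [← List.append_assoc]; exact hB.step (l ++ h) d' k

def consFlow (b : K → I → ℝ) (B : D → List D → K → I → ℝ) : List D → K → I → ℝ
  | [] => b
  | d :: h => B d h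

lemma IsFlow.cons {Q : K → I → K → D → ℝ} {x : K → ℝ} {b : K → I → ℝ}
    {B : D → List D → K → I → ℝ} (hb : ∀ k i, 0 ≤ b k i) (hx : ∀ k, ∑ i, b k i = x k)
    (hB : ∀ d, IsFlow Q (push Q b d) (B d)) : IsFlow Q x (consFlow b B) where
  nonneg h k i := by
    cases h with
    | nil => exact hb k i
    | cons d h => exact (hB d).nonneg h k i
  root k := hx k
  step h d' k := by
    cases h with
    | nil => exact (hB d').root k
    | cons d h => exact (hB d).step h d' k

lemma IsFlow.add {Q : K → I → K → D → ℝ} {x y : K → ℝ} {B B' : List D → K → I → ℝ}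
    (hB : IsFlow Q x B) (hB' : IsFlow Q y B') :
    IsFlow Q (fun k => x k + y k) (fun h k i => B h k i + B' h k i) where
  nonneg h k i := add_nonneg (hB.nonneg _ _ _) (hB'.nonneg _ _ _)
  root k := by simp only [Finset.sum_add_distrib, hB.root, hB'.root]
  step h d' k := by simp only [Finset.sum_add_distrib, hB.step, hB'.step, push_add]

lemma IsFlow.mul {Q : K → I → K → D → ℝ} {x : K → ℝ} {B : List D → K → I → ℝ}
    (hB : IsFlow Q x B) {c : ℝ} (hc : 0 ≤ c) :
    IsFlow Q (fun k => c * x k) (fun h k i => c * B h k i) where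
  nonneg h k i := mul_nonneg hc (hB.nonneg _ _ _)
  root k := by simp only [← Finset.mul_sum, hB.root]
  step h d' k := by simp only [← Finset.mul_sum, hB.step, push_mul]

lemma exists_flow [Nonempty I] {Q : K → I → K → D → ℝ} (hQ : ∀ k i k' d, 0 ≤ Q k i k' d)
    {x : K → ℝ} (hx : ∀ k, 0 ≤ x k) : ∃ B, IsFlow Q x B := by
  classical
  let i0 : I := Classical.arbitrary I
  let e : (K → ℝ) → K → I → ℝ := fun y k i => if i = i0 then y k else 0
  let X : List D → K → ℝ := fun h => h.foldl (fun y d => push Q (e y) d) x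
  have he : ∀ y : K → ℝ, (∀ k, 0 ≤ y k) → ∀ k i, 0 ≤ e y k i := by
    intro y hy k i
    simp only [e]; split_ifs <;> simp [hy]
  have hes : ∀ (y : K → ℝ) k, ∑ i, e y k i = y k := by intro y k; simp [e]
  have hXs : ∀ h d, X (h ++ [d]) = push Q (e (X h)) d := by intro h d; simp [X, List.foldl_append]
  have hX0 : ∀ h k, 0 ≤ X h k := by
    intro h
    induction h using List.reverseRecOn with
    | nil => exact hx
    | append_singleton h d ih => rw [hXs]; exact push_nonneg hQ (he _ ih) d
  exact ⟨fun h => e (X h), ⟨fun h => he _ (hX0 h), fun k => hes _ k,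
    fun h d k => by rw [hes, hXs]⟩⟩

lemma IsFlow.mass {Q : K → I → K → D → ℝ} (hQ1 : ∀ k i, ∑ d, ∑ k', Q k i k' d = 1)
    {x : K → ℝ} {B : List D → K → I → ℝ}
    (hB : IsFlow Q x B) (t : ℕ) : SL t (fun h => ∑ k, ∑ i, B h k i) = ∑ k, x k := by
  induction t generalizing x B with
  | zero => simp [SL, hB.root]
  | succ t ih =>
    simp only [SL]
    rw [Finset.sum_congr rfl fun d _ => ih (hB.tail d), push_mass hQ1]
    simp [hB.root]

lemma IsFlow.G_nonneg {Q : K → I → K → D → ℝ} {g : K → I → J → ℝ}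
    (hg : ∀ k i j, g k i j ∈ Icc (0:ℝ) 1) {x : K → ℝ} {B : List D → K → I → ℝ}
    (hB : IsFlow Q x B) (t : ℕ) : 0 ≤ G g t B :=
  SL_nonneg _ _ fun h => mn_nonneg hg (hB.nonneg h)

lemma IsFlow.G_le {Q : K → I → K → D → ℝ} (hQ1 : ∀ k i, ∑ d, ∑ k', Q k i k' d = 1)
    {g : K → I → J → ℝ} (hg : ∀ k i j, g k i j ∈ Icc (0:ℝ) 1) {x : K → ℝ}
    {B : List D → K → I → ℝ} (hB : IsFlow Q x B) (t : ℕ) : G g t B ≤ ∑ k, x k := by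
  rw [← hB.mass hQ1 t]
  exact SL_mono _ _ _ fun h => mn_le_mass hg (hB.nonneg h)

lemma G_shift (g : K → I → J → ℝ) (t s : ℕ) (B : List D → K → I → ℝ) :
    G g (t + s) B = SL t (fun h => G g s (fun h' => B (h ++ h'))) := SL_append t s _

lemma G_continuous (g : K → I → J → ℝ) (t : ℕ) :
    Continuous (fun B : List D → K → I → ℝ => G g t B) := by
  unfold G
  have h : ∀ l : List D, Continuous (fun B : List D → K → I → ℝ => mn g (B l)) := by
    intro l
    have h1 : Continuous (fun B : List D → K → I → ℝ => B l) := continuous_apply l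
    exact Continuous.comp (g := mn g) (mn_continuous g) h1
  exact SL_continuous t _ h

lemma G_add (g : K → I → J → ℝ) (t : ℕ) (B B' : List D → K → I → ℝ) :
    G g t B + G g t B' ≤ G g t (fun h k i => B h k i + B' h k i) := by
  unfold G; rw [← SL_add]
  exact SL_mono _ _ _ fun h => mn_add _ _ _

lemma G_mul (g : K → I → J → ℝ) (t : ℕ) {c : ℝ} (hc : 0 ≤ c) (B : List D → K → I → ℝ) :
    c * G g t B ≤ G g t (fun h k i => c * B h k i) := by
  unfold G; rw [← SL_mul]
  exact SL_mono _ _ _ fun h => mn_mul _ hc _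

/-- Concatenation of flows at time `t`. -/
lemma exists_concat {Q : K → I → K → D → ℝ} (g : K → I → J → ℝ) (t : ℕ) {x : K → ℝ}
    {B : List D → K → I → ℝ} (hB : IsFlow Q x B) (C : List D → List D → K → I → ℝ)
    (hC : ∀ h, IsFlow Q (fun k => ∑ i, B h k i) (C h)) :
    ∃ B', IsFlow Q x B' ∧ ∀ s, G g (t + s) B' = SL t (fun h => G g s (C h)) := by
  induction t generalizing x B C with
  | zero =>
    refine ⟨C [], ?_, fun s => by simp [SL]⟩
    have := hC []
    simp only [hB.root] at this
    exact this
  | succ t ih =>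
    choose B' h1 h2 using fun d => ih (hB.tail d) (fun h => C (d :: h)) (fun h => hC (d :: h))
    refine ⟨consFlow (B []) B', IsFlow.cons (hB.nonneg []) hB.root h1, fun s => ?_⟩
    rw [show t + 1 + s = (t + s) + 1 by ring]
    simp only [G, SL, consFlow] at h2 ⊢
    exact Finset.sum_congr rfl fun d _ => h2 d s

/-- Dropping part of the initial mass. -/
lemma exists_drop {Q : K → I → K → D → ℝ} (hQ : ∀ k i k' d, 0 ≤ Q k i k' d)
    (hQ1 : ∀ k i, ∑ d, ∑ k', Q k i k' d = 1) {g : K → I → J → ℝ}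
    (hg : ∀ k i j, g k i j ∈ Icc (0:ℝ) 1) [Nonempty I] (T : ℕ) {u w : K → ℝ} (hu : ∀ k, 0 ≤ u k)
    (hw : ∀ k, 0 ≤ w k) {B : List D → K → I → ℝ} (hB : IsFlow Q (fun k => u k + w k) B) :
    ∃ B', IsFlow Q u B' ∧ ∀ t < T, G g t B ≤ G g t B' + ∑ k, w k := by
  induction T generalizing u w B with
  | zero =>
    obtain ⟨B', h⟩ := exists_flow hQ hu
    exact ⟨B', h, fun t ht => absurd ht (Nat.not_lt_zero t)⟩
  | succ T ih =>
    let bu : K → I → ℝ := fun k i => B [] k i * (u k / (u k + w k))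
    let bw : K → I → ℝ := fun k i => B [] k i * (w k / (u k + w k))
    have hB0 : ∀ k i, u k + w k = 0 → B [] k i = 0 := by
      intro k i h
      have h1 := hB.root k
      simp only [h] at h1
      exact (Finset.sum_eq_zero_iff_of_nonneg fun i _ => hB.nonneg [] k i).1 h1 i (Finset.mem_univ i)
    have hsum : B [] = fun k i => bu k i + bw k i := by
      funext k i
      simp only [bu, bw]
      by_cases h : u k + w k = 0
      · simp [hB0 k i h]
      · field_simp
    have hbu : ∀ k i, 0 ≤ bu k i := fun k i =>
      mul_nonneg (hB.nonneg _ _ _) (div_nonneg (hu k) (add_nonneg (hu k) (hw k)))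
    have hbw : ∀ k i, 0 ≤ bw k i := fun k i =>
      mul_nonneg (hB.nonneg _ _ _) (div_nonneg (hw k) (add_nonneg (hu k) (hw k)))
    have hsu : ∀ k, ∑ i, bu k i = u k := by
      intro k
      simp only [bu, ← Finset.sum_mul, hB.root]
      by_cases h : u k + w k = 0
      · have := hu k; have := hw k
        rw [h]; simp; linarith
      · field_simp
    have hsw : ∀ k, ∑ i, bw k i = w k := by
      intro k
      simp only [bw, ← Finset.sum_mul, hB.root]
      by_cases h : u k + w k = 0
      · have := hu k; have := hw k
        rw [h]; simp; linarith
      · field_simp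
    have htail : ∀ d, IsFlow Q (fun k => push Q bu d k + push Q bw d k) (fun h => B (d :: h)) := by
      intro d
      have := hB.tail d
      rw [hsum] at this
      have h2 : push Q (fun k i => bu k i + bw k i) d = fun k => push Q bu d k + push Q bw d k :=
        funext fun k => push_add _ _ _ _ _
      rwa [h2] at this
    choose B' h1 h2 using fun d => ih (push_nonneg hQ hbu d) (push_nonneg hQ hbw d) (htail d)
    refine ⟨consFlow bu B', IsFlow.cons hbu hsu h1, fun t ht => ?_⟩
    cases t with
    | zero =>
      simp only [G, SL, consFlow]
      obtain ⟨j, hj⟩ := exists_mn g bu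
      rw [hj, hsum]
      refine (mn_le _ _ j).trans ?_
      rw [lin_add]
      have := lin_le hg hbw j
      simp only [hsw] at this
      linarith
    | succ t =>
      have h3 : ∑ d, ∑ k, push Q bw d k = ∑ k, w k := by rw [push_mass hQ1]; simp [hsw]
      rw [← h3]
      simp only [G, SL, consFlow] at h2 ⊢
      rw [← Finset.sum_add_distrib]
      exact Finset.sum_le_sum fun d _ => h2 d t (by omega)

end Flow
end Stmt19

open Set
set_option linter.unusedSectionVars false
set_option linter.unusedVariables false
namespace Stmt19

/-! ### Part C: compactness and minimax -/

lemma le_SL {A : Type*} [Fintype A] (f : List A → ℝ) (hf : ∀ l, 0 ≤ f l) (l : List A) :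
    f l ≤ SL l.length f := by
  induction l generalizing f with
  | nil => exact le_refl _
  | cons a l ih =>
    refine (ih (fun h => f (a :: h)) fun _ => hf _).trans ?_
    exact Finset.single_le_sum (f := fun a => SL l.length (fun h => f (a :: h)))
      (fun a _ => SL_nonneg _ _ fun _ => hf _) (Finset.mem_univ a)

section Flow
variable {K I J D : Type*} [Fintype K] [Fintype I] [Fintype J] [Fintype D]

lemma IsFlow.le {Q : K → I → K → D → ℝ} (hQ1 : ∀ k i, ∑ d, ∑ k', Q k i k' d = 1)
    {x : K → ℝ} {B : List D → K → I → ℝ} (hB : IsFlow Q x B) (h : List D) (k : K) (i : I) :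
    B h k i ≤ ∑ k, x k := by
  have h0 : ∀ h : List D, 0 ≤ ∑ k, ∑ i, B h k i := fun h =>
    Finset.sum_nonneg fun _ _ => Finset.sum_nonneg fun _ _ => hB.nonneg _ _ _
  have h1 := le_SL (fun h => ∑ k, ∑ i, B h k i) h0 h
  rw [hB.mass hQ1] at h1
  refine le_trans ?_ h1
  calc B h k i ≤ ∑ i, B h k i :=
        Finset.single_le_sum (f := fun i => B h k i) (fun i _ => hB.nonneg h k i) (Finset.mem_univ i)
    _ ≤ _ := Finset.single_le_sum (f := fun k => ∑ i, B h k i)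
        (fun k _ => Finset.sum_nonneg fun i _ => hB.nonneg h k i) (Finset.mem_univ k)

lemma isCompact_flow {Q : K → I → K → D → ℝ} (hQ1 : ∀ k i, ∑ d, ∑ k', Q k i k' d = 1)
    (x : K → ℝ) : IsCompact {B | IsFlow Q x B} := by
  have hc : IsCompact (Set.univ.pi fun _ : List D => Set.univ.pi fun _ : K =>
      Set.univ.pi fun _ : I => Icc (0:ℝ) (∑ k, x k)) :=
    isCompact_univ_pi fun _ => isCompact_univ_pi fun _ => isCompact_univ_pi fun _ => isCompact_Icc
  refine hc.of_isClosed_subset ?_ ?_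
  · have : {B | IsFlow Q x B} = {B | ∀ h k i, 0 ≤ B h k i} ∩ {B | ∀ k, ∑ i, B [] k i = x k} ∩
        {B | ∀ h d k, ∑ i, B (h ++ [d]) k i = push Q (B h) d k} := by
      ext B
      exact ⟨fun h => ⟨⟨h.1, h.2⟩, h.3⟩, fun h => ⟨h.1.1, h.1.2, h.2⟩⟩
    rw [this]
    refine (IsClosed.inter ?_ ?_).inter ?_
    · simp only [Set.ofPred_forall]
      exact isClosed_iInter fun h => isClosed_iInter fun k => isClosed_iInter fun i =>
        isClosed_le (by fun_prop) (by fun_prop)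
    · simp only [Set.ofPred_forall]
      exact isClosed_iInter fun k => isClosed_eq (by fun_prop) (by fun_prop)
    · simp only [Set.ofPred_forall, push]
      exact isClosed_iInter fun h => isClosed_iInter fun k => isClosed_iInter fun i =>
        isClosed_eq (by fun_prop) (by fun_prop)
  · intro B hB h _ k _ i _
    exact ⟨hB.nonneg h k i, hB.le hQ1 h k i⟩

/-- Families of flows indexed by the initial signal. -/
def Fam (Q : K → I → K → D → ℝ) (ξ : D → K → ℝ) : Set (D → List D → K → I → ℝ) :=
  Set.univ.pi fun d => {B | IsFlow Q (ξ d) B}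

lemma mem_Fam {Q : K → I → K → D → ℝ} {ξ : D → K → ℝ} {B : D → List D → K → I → ℝ} :
    B ∈ Fam Q ξ ↔ ∀ d, IsFlow Q (ξ d) (B d) := by simp [Fam]

lemma isCompact_Fam {Q : K → I → K → D → ℝ} (hQ1 : ∀ k i, ∑ d, ∑ k', Q k i k' d = 1)
    (ξ : D → K → ℝ) : IsCompact (Fam Q ξ) := isCompact_univ_pi fun d => isCompact_flow hQ1 _

lemma convex_flow (Q : K → I → K → D → ℝ) (x : K → ℝ) : Convex ℝ {B | IsFlow Q x B} := by
  intro B hB B' hB' a b ha hb hab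
  have h := (IsFlow.mul hB ha).add (IsFlow.mul hB' hb)
  have hx : (fun k => a * x k + b * x k) = x := by
    funext k; rw [← add_mul, hab, one_mul]
  rw [hx] at h
  exact h

lemma convex_Fam (Q : K → I → K → D → ℝ) (ξ : D → K → ℝ) : Convex ℝ (Fam Q ξ) :=
  convex_pi fun d _ => convex_flow Q _

lemma Fam_nonempty [Nonempty I] {Q : K → I → K → D → ℝ} (hQ : ∀ k i k' d, 0 ≤ Q k i k' d)
    {ξ : D → K → ℝ} (hξ : ∀ d k, 0 ≤ ξ d k) : (Fam Q ξ).Nonempty := by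
  choose B hB using fun d => exists_flow hQ (hξ d)
  exact ⟨B, mem_Fam.2 hB⟩

variable [Nonempty J]

/-- Stage payoff of a family of flows. -/
noncomputable def GG (g : K → I → J → ℝ) (t : ℕ) (B : D → List D → K → I → ℝ) : ℝ :=
  ∑ d, G g t (B d)

lemma GG_continuous (g : K → I → J → ℝ) (t : ℕ) :
    Continuous (fun B : D → List D → K → I → ℝ => GG g t B) := by
  unfold GG
  refine continuous_finsetSum _ fun d _ => ?_
  have h1 : Continuous (fun B : D → List D → K → I → ℝ => B d) := continuous_apply d
  exact Continuous.comp (g := fun B : List D → K → I → ℝ => G g t B) (G_continuous g t) h1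

lemma GG_concave (g : K → I → J → ℝ) (t : ℕ) (Q : K → I → K → D → ℝ) (ξ : D → K → ℝ) :
    ConcaveOn ℝ (Fam Q ξ) (fun B => GG g t B) := by
  refine ⟨convex_Fam Q ξ, ?_⟩
  intro B _ B' _ a b ha hb _
  simp only [GG, smul_eq_mul, Finset.mul_sum]
  rw [← Finset.sum_add_distrib]
  refine Finset.sum_le_sum fun d _ => ?_
  refine (add_le_add (G_mul g t ha (B d)) (G_mul g t hb (B' d))).trans ?_
  exact G_add g t _ _

lemma GG_nonneg {Q : K → I → K → D → ℝ} {g : K → I → J → ℝ}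
    (hg : ∀ k i j, g k i j ∈ Icc (0:ℝ) 1) {ξ : D → K → ℝ} {B : D → List D → K → I → ℝ}
    (hB : B ∈ Fam Q ξ) (t : ℕ) : 0 ≤ GG g t B :=
  Finset.sum_nonneg fun d _ => (mem_Fam.1 hB d).G_nonneg hg t

lemma GG_le {Q : K → I → K → D → ℝ} (hQ1 : ∀ k i, ∑ d, ∑ k', Q k i k' d = 1)
    {g : K → I → J → ℝ} (hg : ∀ k i j, g k i j ∈ Icc (0:ℝ) 1) {ξ : D → K → ℝ}
    (hξ1 : ∑ d, ∑ k, ξ d k = 1) {B : D → List D → K → I → ℝ}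
    (hB : B ∈ Fam Q ξ) (t : ℕ) : GG g t B ≤ 1 := by
  rw [← hξ1]
  exact Finset.sum_le_sum fun d _ => (mem_Fam.1 hB d).G_le hQ1 hg t

/-- Stage payoff of a family of flows against a strategy of player 2. -/
noncomputable def LL (g : K → I → J → ℝ) (t : ℕ) (B : D → List D → K → I → ℝ)
    (τ : List D → J → ℝ) : ℝ :=
  ∑ d, SL t (fun h => ∑ j, τ (d :: h) j * lin g (B d h) j)

end Flow

lemma lscOn {E : Type*} [TopologicalSpace E] {f : E → ℝ} (hf : Continuous f) (s : Set E) :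
    LowerSemicontinuousOn f s := hf.lowerSemicontinuous.lowerSemicontinuousOn s

lemma uscOn {E : Type*} [TopologicalSpace E] {f : E → ℝ} (hf : Continuous f) (s : Set E) :
    UpperSemicontinuousOn f s := hf.upperSemicontinuous.upperSemicontinuousOn s

lemma minimax_seq {E : Type*} [TopologicalSpace E] [AddCommGroup E] [Module ℝ E]
    [IsTopologicalAddGroup E] [ContinuousSMul ℝ E] {Y : Set E} (neY : Y.Nonempty)
    (kY : IsCompact Y) (cY : Convex ℝ Y) (A : ℕ → E → ℝ) (hA : ∀ m, Continuous (A m))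
    (hA' : ∀ m, ConcaveOn ℝ Y (A m)) (c : ℝ)
    (h : ∀ (M : ℕ) (ρ : Fin (M + 1) → ℝ), ρ ∈ stdSimplex ℝ (Fin (M + 1)) →
      ∃ B ∈ Y, c ≤ ∑ m, ρ m * A m B) :
    ∃ B ∈ Y, ∀ m, c ≤ A m B := by
  have key : ∀ M : ℕ, ∃ B ∈ Y, ∀ m ≤ M, c ≤ A m B := by
    intro M
    obtain ⟨ρ, hρ, B, hB, hs⟩ := Sion.exists_isSaddlePointOn (X := stdSimplex ℝ (Fin (M + 1)))
      (Y := Y) (f := fun ρ B => ∑ m, ρ m * A m B)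
      (⟨_, single_mem_stdSimplex ℝ (0 : Fin (M + 1))⟩)
      (convex_stdSimplex ℝ _) (isCompact_stdSimplex ℝ _)
      (fun y _ => lscOn (by fun_prop) _)
      (fun y _ => by
        refine ConvexOn.quasiconvexOn ⟨convex_stdSimplex ℝ _, fun ρ _ ρ' _ a b _ _ _ => le_of_eq ?_⟩
        simp only [Pi.add_apply, Pi.smul_apply, smul_eq_mul, Finset.mul_sum]
        rw [← Finset.sum_add_distrib]
        exact Finset.sum_congr rfl fun _ _ => by ring)
      cY neY kY
      (fun ρ _ => uscOn (by
        refine continuous_finsetSum _ fun m _ => ?_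
        have := hA m
        fun_prop) _)
      (fun ρ hρ => by
        refine ConcaveOn.quasiconcaveOn ⟨cY, fun B hB B' hB' a b ha hb hab => ?_⟩
        simp only [smul_eq_mul, Finset.mul_sum]
        rw [← Finset.sum_add_distrib]
        refine Finset.sum_le_sum fun m _ => ?_
        have h1 := (hA' m).2 hB hB' ha hb hab
        have h2 := mul_le_mul_of_nonneg_left h1 (hρ.1 m)
        simp only [smul_eq_mul] at h2
        linarith)
    obtain ⟨B0, hB0, hc⟩ := h M ρ hρ
    refine ⟨B, hB, fun m hm => hc.trans ?_⟩
    have h1 := hs _ (single_mem_stdSimplex ℝ (⟨m, by omega⟩ : Fin (M + 1))) B0 hB0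
    refine h1.trans (le_of_eq ?_)
    simp [Pi.single_apply]
  have := kY.inter_iInter_nonempty (fun m => {B | c ≤ A m B})
    (fun m => isClosed_le continuous_const (hA m)) (fun u => by
      obtain ⟨B, hB, h1⟩ := key (u.sup id)
      refine ⟨B, hB, ?_⟩
      simp only [mem_iInter]
      exact fun m hm => h1 m (Finset.le_sup (f := id) hm))
  obtain ⟨B, hB, hB'⟩ := this
  exact ⟨B, hB, fun m => by simpa using mem_iInter.1 hB' m⟩

section Flow2
variable {K I J D : Type*} [Fintype K] [Fintype I] [Fintype J] [Fintype D] [Nonempty J]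

/-- Player 2 has a strategy in the game played on the stages `m, ..., m+n-1`. -/
lemma minimax_block [Nonempty I] {Q : K → I → K → D → ℝ} (hQ : ∀ k i k' d, 0 ≤ Q k i k' d)
    (hQ1 : ∀ k i, ∑ d, ∑ k', Q k i k' d = 1)
    (g : K → I → J → ℝ) {ξ : D → K → ℝ} (hξ : ∀ d k, 0 ≤ ξ d k) (m n : ℕ) (c : ℝ)
    (h : ∀ B ∈ Fam Q ξ, ∑ t ∈ Finset.range n, GG g (m + t) B ≤ c) :
    ∃ τ : List D → J → ℝ, (∀ l, τ l ∈ stdSimplex ℝ J) ∧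
      ∀ B ∈ Fam Q ξ, ∑ t ∈ Finset.range n, LL g (m + t) B τ ≤ c := by
  classical
  have hX : Convex ℝ (Set.univ.pi fun _ : List D => stdSimplex ℝ J) :=
    convex_pi fun _ _ => convex_stdSimplex ℝ J
  obtain ⟨τ, hτ, B, hB, hs⟩ := Sion.exists_isSaddlePointOn
      (X := Set.univ.pi fun _ : List D => stdSimplex ℝ J)
      (Y := Fam Q ξ) (f := fun τ B => ∑ t ∈ Finset.range n, LL g (m + t) B τ)
      (⟨fun _ => Pi.single (Classical.arbitrary J) 1, fun _ _ => single_mem_stdSimplex ℝ _⟩)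
      hX (isCompact_univ_pi fun _ => isCompact_stdSimplex ℝ J)
      (fun B _ => lscOn (by
        unfold LL
        refine continuous_finsetSum _ fun t _ => continuous_finsetSum _ fun d _ => ?_
        refine SL_continuous _ _ fun l => ?_
        fun_prop) _)
      (fun B _ => by
        refine ConvexOn.quasiconvexOn ⟨hX, fun ρ _ ρ' _ a b _ _ _ => le_of_eq ?_⟩
        simp only [LL, smul_eq_mul, Finset.mul_sum, ← SL_mul, ← Finset.sum_add_distrib, ← SL_add,
          Pi.add_apply, Pi.smul_apply]
        refine Finset.sum_congr rfl fun t _ => Finset.sum_congr rfl fun d _ => ?_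
        refine SL_congr _ _ _ fun l _ => Finset.sum_congr rfl fun j _ => ?_
        ring)
      (convex_Fam Q ξ) (Fam_nonempty hQ hξ) (isCompact_Fam hQ1 ξ)
      (fun τ _ => uscOn (by
        unfold LL
        refine continuous_finsetSum _ fun t _ => continuous_finsetSum _ fun d _ => ?_
        refine SL_continuous _ _ fun l => ?_
        unfold lin
        fun_prop) _)
      (fun τ _ => by
        refine ConcaveOn.quasiconcaveOn ⟨convex_Fam Q ξ, fun B _ B' _ a b _ _ _ => le_of_eq ?_⟩
        simp only [LL, smul_eq_mul, Finset.mul_sum, ← SL_mul, ← Finset.sum_add_distrib, ← SL_add]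
        refine Finset.sum_congr rfl fun t _ => Finset.sum_congr rfl fun d _ => ?_
        refine SL_congr _ _ _ fun l _ => Finset.sum_congr rfl fun j _ => ?_
        have : lin g ((a • B + b • B') d l) j = a * lin g (B d l) j + b * lin g (B' d l) j := by
          rw [← lin_mul, ← lin_mul, ← lin_add]; rfl
        rw [this]; ring)
  refine ⟨τ, fun l => hτ l (mem_univ _), fun B1 hB1 => ?_⟩
  choose J0 hJ0 using fun b : K → I → ℝ => exists_mn g b
  let τ1 : List D → J → ℝ := fun l => match l with
    | [] => Pi.single (Classical.arbitrary J) 1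
    | d :: h => Pi.single (J0 (B d h)) 1
  have hτ1 : τ1 ∈ (Set.univ.pi fun _ : List D => stdSimplex ℝ J) := by
    intro l _
    cases l with
    | nil => exact single_mem_stdSimplex ℝ _
    | cons d h => exact single_mem_stdSimplex ℝ _
  refine (hs τ1 hτ1 B1 hB1).trans ((le_of_eq ?_).trans (h B hB))
  refine Finset.sum_congr rfl fun t _ => Finset.sum_congr rfl fun d _ => ?_
  refine SL_congr _ _ _ fun l _ => ?_
  rw [hJ0]
  simp [τ1, Pi.single_apply]

end Flow2
end Stmt19

open Set
set_option linter.unusedSectionVars false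
set_option linter.unusedVariables false
namespace Stmt19

/-! ### Part D: values of positive evaluations -/

/-- A positive normalized functional on sequences, depending on the first `T` coordinates. -/
structure IsPhi (Φ : (ℕ → ℝ) → ℝ) (T : ℕ) : Prop where
  mono : ∀ X X', (∀ t < T, X t ≤ X' t) → Φ X ≤ Φ X'
  add : ∀ X X', Φ (fun t => X t + X' t) = Φ X + Φ X'
  mul : ∀ (c : ℝ) X, Φ (fun t => c * X t) = c * Φ X
  one : Φ (fun _ => 1) = 1
  cont : Continuous Φ

namespace IsPhi
variable {Φ : (ℕ → ℝ) → ℝ} {T : ℕ} (hΦ : IsPhi Φ T)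

lemma const (hΦ : IsPhi Φ T)
    (c : ℝ) : Φ (fun _ => c) = c := by
  have := hΦ.mul c (fun _ => 1)
  simpa [hΦ.one] using this

lemma sum (hΦ : IsPhi Φ T)
    {ι : Type*} (s : Finset ι) (X : ι → ℕ → ℝ) :
    Φ (fun t => ∑ i ∈ s, X i t) = ∑ i ∈ s, Φ (X i) := by
  classical
  induction s using Finset.induction_on with
  | empty => simpa using hΦ.const 0
  | insert a s ha ih => simp only [Finset.sum_insert ha, hΦ.add, ih]

lemma SL (hΦ : IsPhi Φ T)
    {A : Type*} [Fintype A] (u : ℕ) (X : List A → ℕ → ℝ) :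
    Φ (fun t => SL u (fun h => X h t)) = SL u (fun h => Φ (X h)) := by
  induction u generalizing X with
  | zero => rfl
  | succ u ih => simp only [Stmt19.SL, hΦ.sum, ih (fun h => X (_ :: h))]

end IsPhi

section Val
variable {K I J D : Type*} [Fintype K] [Fintype I] [Fintype J] [Fintype D] [Nonempty J]

/-- Value of the vector `x` for the functional `Φ`. -/
noncomputable def Val (Q : K → I → K → D → ℝ) (g : K → I → J → ℝ) (Φ : (ℕ → ℝ) → ℝ)
    (x : K → ℝ) : ℝ :=
  sSup ((fun B => Φ (fun t => G g t B)) '' {B | IsFlow Q x B})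

variable {Q : K → I → K → D → ℝ} (hQ : ∀ k i k' d, 0 ≤ Q k i k' d)
    (hQ1 : ∀ k i, ∑ d, ∑ k', Q k i k' d = 1) {g : K → I → J → ℝ}
    (hg : ∀ k i j, g k i j ∈ Icc (0:ℝ) 1) {Φ : (ℕ → ℝ) → ℝ} {T : ℕ} (hΦ : IsPhi Φ T)
    [Nonempty I]

lemma PhiG_continuous (hQ1 : ∀ k i, ∑ d, ∑ k', Q k i k' d = 1)
    (hΦ : IsPhi Φ T)
    : Continuous (fun B : List D → K → I → ℝ => Φ (fun t => G g t B)) := by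
  refine Continuous.comp (g := Φ) hΦ.cont ?_
  exact continuous_pi fun t => G_continuous g t

lemma le_Val (hQ1 : ∀ k i, ∑ d, ∑ k', Q k i k' d = 1)
    (hΦ : IsPhi Φ T)
    {x : K → ℝ} {B : List D → K → I → ℝ} (hB : IsFlow Q x B) :
    Φ (fun t => G g t B) ≤ Val Q g Φ x := by
  refine le_csSup ?_ ⟨B, hB, rfl⟩
  exact ((isCompact_flow hQ1 x).image (PhiG_continuous hQ1 hΦ)).bddAbove

lemma exists_Val (hQ : ∀ k i k' d, 0 ≤ Q k i k' d)
    (hQ1 : ∀ k i, ∑ d, ∑ k', Q k i k' d = 1)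
    (hΦ : IsPhi Φ T)
    {x : K → ℝ} (hx : ∀ k, 0 ≤ x k) :
    ∃ B, IsFlow Q x B ∧ Val Q g Φ x = Φ (fun t => G g t B) := by
  obtain ⟨B0, h0⟩ := exists_flow hQ hx
  have := ((isCompact_flow hQ1 x).image
    (PhiG_continuous (g := g) hQ1 hΦ)).sSup_mem ⟨_, B0, h0, rfl⟩
  obtain ⟨B, hB, h⟩ := this
  exact ⟨B, hB, h.symm⟩

lemma Val_drop (hQ : ∀ k i k' d, 0 ≤ Q k i k' d)
    (hQ1 : ∀ k i, ∑ d, ∑ k', Q k i k' d = 1)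
    (hg : ∀ k i j, g k i j ∈ Icc (0:ℝ) 1)
    (hΦ : IsPhi Φ T)
    {u w : K → ℝ} (hu : ∀ k, 0 ≤ u k) (hw : ∀ k, 0 ≤ w k) :
    Val Q g Φ (fun k => u k + w k) ≤ Val Q g Φ u + ∑ k, w k := by
  obtain ⟨B, hB, h⟩ := exists_Val (g := g) hQ hQ1 hΦ (x := fun k => u k + w k)
    (fun k => add_nonneg (hu k) (hw k))
  obtain ⟨B', hB', h'⟩ := exists_drop hQ hQ1 hg T hu hw hB
  rw [h]
  have h1 := hΦ.mono _ _ h'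
  rw [hΦ.add, hΦ.const] at h1
  have h2 := le_Val (g := g) hQ1 hΦ hB'
  linarith

lemma Val_mono (hQ : ∀ k i k' d, 0 ≤ Q k i k' d)
    (hQ1 : ∀ k i, ∑ d, ∑ k', Q k i k' d = 1)
    (hg : ∀ k i j, g k i j ∈ Icc (0:ℝ) 1)
    (hΦ : IsPhi Φ T)
    {u w : K → ℝ} (hu : ∀ k, 0 ≤ u k) (hw : ∀ k, 0 ≤ w k) :
    Val Q g Φ u ≤ Val Q g Φ (fun k => u k + w k) := by
  obtain ⟨B, hB, h⟩ := exists_Val (g := g) hQ hQ1 hΦ hu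
  obtain ⟨B', hB'⟩ := exists_flow hQ hw
  rw [h]
  refine le_trans ?_ (le_Val hQ1 hΦ (hB.add hB'))
  refine hΦ.mono _ _ fun t _ => ?_
  have h1 := G_add g t B B'
  have h2 := hB'.G_nonneg hg t
  linarith

lemma Val_lip (hQ : ∀ k i k' d, 0 ≤ Q k i k' d)
    (hQ1 : ∀ k i, ∑ d, ∑ k', Q k i k' d = 1)
    (hg : ∀ k i j, g k i j ∈ Icc (0:ℝ) 1)
    (hΦ : IsPhi Φ T)
    {x y : K → ℝ} (hx : ∀ k, 0 ≤ x k) (hy : ∀ k, 0 ≤ y k) :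
    Val Q g Φ x ≤ Val Q g Φ y + ∑ k, |x k - y k| := by
  have hu : ∀ k, 0 ≤ min (x k) (y k) := fun k => le_min (hx k) (hy k)
  have hw : ∀ k, 0 ≤ x k - min (x k) (y k) := fun k => sub_nonneg.2 (min_le_left _ _)
  have hw' : ∀ k, 0 ≤ y k - min (x k) (y k) := fun k => sub_nonneg.2 (min_le_right _ _)
  have h1 := Val_drop hQ hQ1 hg hΦ hu hw
  have h2 := Val_mono hQ hQ1 hg hΦ hu hw'
  simp only [add_sub_cancel] at h1 h2
  have h3 : ∑ k, (x k - min (x k) (y k)) ≤ ∑ k, |x k - y k| := by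
    refine Finset.sum_le_sum fun k _ => ?_
    rcases le_total (x k) (y k) with h | h
    · simp [min_eq_left h]
    · rw [min_eq_right h]; exact le_abs_self _
  change Val Q g Φ x ≤ _ at h1
  change _ ≤ Val Q g Φ y at h2
  linarith

lemma Val_mul_le (hQ : ∀ k i k' d, 0 ≤ Q k i k' d)
    (hQ1 : ∀ k i, ∑ d, ∑ k', Q k i k' d = 1)
    (hg : ∀ k i j, g k i j ∈ Icc (0:ℝ) 1)
    (hΦ : IsPhi Φ T)
    {x : K → ℝ} (hx : ∀ k, 0 ≤ x k) {c : ℝ} (hc : 0 ≤ c) :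
    c * Val Q g Φ x ≤ Val Q g Φ (fun k => c * x k) := by
  obtain ⟨B, hB, h⟩ := exists_Val (g := g) hQ hQ1 hΦ hx
  rw [h, ← hΦ.mul]
  refine le_trans ?_ (le_Val hQ1 hΦ (hB.mul hc))
  exact hΦ.mono _ _ fun t _ => G_mul g t hc B

lemma Val_bounds (hQ : ∀ k i k' d, 0 ≤ Q k i k' d)
    (hQ1 : ∀ k i, ∑ d, ∑ k', Q k i k' d = 1)
    (hg : ∀ k i j, g k i j ∈ Icc (0:ℝ) 1)
    (hΦ : IsPhi Φ T)
    {x : K → ℝ} (hx : ∀ k, 0 ≤ x k) :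
    0 ≤ Val Q g Φ x ∧ Val Q g Φ x ≤ ∑ k, x k := by
  obtain ⟨B, hB, h⟩ := exists_Val (g := g) hQ hQ1 hΦ hx
  rw [h]
  constructor
  · rw [← hΦ.const 0]; exact hΦ.mono _ _ fun t _ => hB.G_nonneg hg t
  · rw [← hΦ.const (∑ k, x k)]; exact hΦ.mono _ _ fun t _ => hB.G_le hQ1 hg t

lemma Val_mul (hQ : ∀ k i k' d, 0 ≤ Q k i k' d)
    (hQ1 : ∀ k i, ∑ d, ∑ k', Q k i k' d = 1)
    (hg : ∀ k i j, g k i j ∈ Icc (0:ℝ) 1)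
    (hΦ : IsPhi Φ T)
    {x : K → ℝ} (hx : ∀ k, 0 ≤ x k) {c : ℝ} (hc : 0 ≤ c) :
    Val Q g Φ (fun k => c * x k) = c * Val Q g Φ x := by
  refine le_antisymm ?_ (Val_mul_le hQ hQ1 hg hΦ hx hc)
  rcases hc.eq_or_lt with h | h
  · subst h
    have := (Val_bounds hQ hQ1 hg hΦ (x := fun k => 0 * x k) (by simp)).2
    simpa using this
  · have h1 := Val_mul_le hQ hQ1 hg hΦ (x := fun k => c * x k)
      (fun k => mul_nonneg hc (hx k)) (inv_nonneg.2 hc)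
    simp only [inv_mul_cancel_left₀ h.ne'] at h1
    change _ ≤ Val Q g Φ x at h1
    rwa [inv_mul_le_iff₀ h] at h1

end Val

/-- Discretization of directions. -/
lemma exists_cells (K : Type*) [Fintype K] [Nonempty K] {ε : ℝ} (hε : 0 < ε) :
    ∃ (s : Finset (K → ℝ)) (F : (K → ℝ) → (K → ℝ)), (∀ x, F x ∈ s) ∧
      (∀ e ∈ s, ∀ k, 0 ≤ e k) ∧ (∀ e ∈ s, ∑ k, e k = 1) ∧
      ∀ x : K → ℝ, (∀ k, 0 ≤ x k) → ∑ k, |x k - (∑ k, x k) * F x k| ≤ ε * ∑ k, x k := by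
  classical
  have hcard : (0:ℝ) < Fintype.card K := by exact_mod_cast Fintype.card_pos
  obtain ⟨s, hs, hsf, hcov⟩ := (isCompact_stdSimplex ℝ K).finite_cover_balls
    (div_pos hε hcard)
  have hex : ∀ x : K → ℝ, ∃ e ∈ s, (∀ k, 0 ≤ x k) →
      ∑ k, |x k - (∑ k, x k) * e k| ≤ ε * ∑ k, x k := by
    intro x
    obtain ⟨e0, he0⟩ : s.Nonempty := by
      have h0 := hcov (single_mem_stdSimplex ℝ (Classical.arbitrary K))
      simp only [mem_iUnion] at h0
      obtain ⟨e, he, -⟩ := h0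
      exact ⟨e, he⟩
    by_cases hx : ∀ k, 0 ≤ x k
    swap
    · exact ⟨e0, he0, fun h => absurd h hx⟩
    have hm : 0 ≤ ∑ k, x k := Finset.sum_nonneg fun k _ => hx k
    rcases hm.eq_or_lt with h | h
    · have hx0 : ∀ k, x k = 0 := fun k =>
        (Finset.sum_eq_zero_iff_of_nonneg fun k _ => hx k).1 h.symm k (Finset.mem_univ k)
      exact ⟨e0, he0, fun _ => by simp [hx0]⟩
    · set m := ∑ k, x k with hmdef
      have hp : (fun k => x k / m) ∈ stdSimplex ℝ K :=
        ⟨fun k => div_nonneg (hx k) hm, by rw [← Finset.sum_div, div_self h.ne']⟩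
      have h0 := hcov hp
      simp only [mem_iUnion] at h0
      obtain ⟨e, he, hd⟩ := h0
      refine ⟨e, he, fun _ => ?_⟩
      rw [Metric.mem_ball] at hd
      have h1 : ∀ k, |x k - m * e k| ≤ m * (ε / Fintype.card K) := by
        intro k
        have h2 := (dist_le_pi_dist (fun k => x k / m) e k).trans hd.le
        rw [Real.dist_eq] at h2
        have h3 : x k - m * e k = m * (x k / m - e k) := by field_simp
        rw [h3, abs_mul, abs_of_pos h]
        exact mul_le_mul_of_nonneg_left h2 hm
      refine (Finset.sum_le_sum fun k _ => h1 k).trans (le_of_eq ?_)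
      rw [Finset.sum_const, Finset.card_univ, nsmul_eq_mul]
      field_simp
  choose F hF1 hF2 using hex
  refine ⟨hsf.toFinset, F, fun x => hsf.mem_toFinset.2 (hF1 x), fun e he k => ?_, fun e he => ?_,
    hF2⟩
  · exact (hs (hsf.mem_toFinset.1 he)).1 k
  · exact (hs (hsf.mem_toFinset.1 he)).2

end Stmt19

open Set
set_option linter.unusedSectionVars false
set_option linter.unusedVariables false
namespace Stmt19

/-! ### Part E: the general limit value -/

section Main
variable {K I J D : Type*} [Fintype K] [Fintype I] [Fintype J] [Fintype D] [Nonempty J]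

/-- Average over `n` stages of the sum of `f` over the (unnormalized) beliefs. -/
noncomputable def Yf (B : D → List D → K → I → ℝ) (m n : ℕ) (f : (K → ℝ) → ℝ) : ℝ :=
  (1 / (n : ℝ)) * ∑ t ∈ Finset.range n, ∑ d, SL (m + t) (fun h => f (fun k => ∑ i, B d h k i))

lemma Yf_add (B : D → List D → K → I → ℝ) (m n : ℕ) (f f' : (K → ℝ) → ℝ) :
    Yf B m n (fun x => f x + f' x) = Yf B m n f + Yf B m n f' := by
  simp only [Yf, SL_add, Finset.sum_add_distrib, mul_add]

lemma Yf_mul (B : D → List D → K → I → ℝ) (m n : ℕ) (c : ℝ) (f : (K → ℝ) → ℝ) :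
    Yf B m n (fun x => c * f x) = c * Yf B m n f := by
  simp only [Yf, SL_mul, ← Finset.mul_sum]; ring

lemma Yf_sum {ι : Type*} (s : Finset ι) (B : D → List D → K → I → ℝ) (m n : ℕ)
    (f : ι → (K → ℝ) → ℝ) :
    Yf B m n (fun x => ∑ e ∈ s, f e x) = ∑ e ∈ s, Yf B m n (f e) := by
  classical
  induction s using Finset.induction_on with
  | empty => simp [Yf, SL_zero]
  | insert a s ha ih => simp only [Finset.sum_insert ha, Yf_add, ih]

variable {Q : K → I → K → D → ℝ} (hQ : ∀ k i k' d, 0 ≤ Q k i k' d)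
    (hQ1 : ∀ k i, ∑ d, ∑ k', Q k i k' d = 1) {g : K → I → J → ℝ}
    (hg : ∀ k i j, g k i j ∈ Icc (0:ℝ) 1) {Φ : (ℕ → ℝ) → ℝ} {T : ℕ} (hΦ : IsPhi Φ T)
    [Nonempty I] {ξ : D → K → ℝ} (hξ : ∀ d k, 0 ≤ ξ d k) (hξ1 : ∑ d, ∑ k, ξ d k = 1)

lemma Yf_mono {B : D → List D → K → I → ℝ} (hB : B ∈ Fam Q ξ) (m n : ℕ) {f f' : (K → ℝ) → ℝ}
    (h : ∀ x : K → ℝ, (∀ k, 0 ≤ x k) → f x ≤ f' x) : Yf B m n f ≤ Yf B m n f' := by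
  refine mul_le_mul_of_nonneg_left ?_ (by positivity)
  refine Finset.sum_le_sum fun t _ => Finset.sum_le_sum fun d _ => SL_mono _ _ _ fun l => ?_
  exact h _ fun k => Finset.sum_nonneg fun i _ => (mem_Fam.1 hB d).nonneg _ _ _

lemma Yf_mass (hQ1 : ∀ k i, ∑ d, ∑ k', Q k i k' d = 1)
    (hξ1 : ∑ d, ∑ k, ξ d k = 1)
    {B : D → List D → K → I → ℝ} (hB : B ∈ Fam Q ξ) (m : ℕ) {n : ℕ} (hn : 1 ≤ n) :
    Yf B m n (fun x => ∑ k, x k) = 1 := by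
  have h : ∀ t d, SL (m + t) (fun h => ∑ k, ∑ i, B d h k i) = ∑ k, ξ d k := fun t d =>
    (mem_Fam.1 hB d).mass hQ1 _
  simp only [Yf, h, hξ1]
  have : (n : ℝ) ≠ 0 := by positivity
  simp [this]

/-- Player 1 can, from any stage of any family of flows, switch to optimal continuation. -/
lemma exists_ge_Yf (hQ : ∀ k i k' d, 0 ≤ Q k i k' d)
    (hQ1 : ∀ k i, ∑ d, ∑ k', Q k i k' d = 1)
    (hg : ∀ k i j, g k i j ∈ Icc (0:ℝ) 1)
    (hΦ : IsPhi Φ T)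
    {B : D → List D → K → I → ℝ} (hB : B ∈ Fam Q ξ) (u : ℕ) {δ : ℝ}
    (hsh : ∀ X : ℕ → ℝ, (∀ t, 0 ≤ X t ∧ X t ≤ 1) → Φ (fun s => X (u + s)) ≤ Φ X + δ)
    (hξ1 : ∑ d, ∑ k, ξ d k = 1) :
    ∃ B' ∈ Fam Q ξ, ∑ d, SL u (fun h => Val Q g Φ (fun k => ∑ i, B d h k i)) - δ
      ≤ Φ (fun t => GG g t B') := by
  have hB1 := mem_Fam.1 hB
  choose C hC1 hC2 using fun (d : D) (h : List D) =>
    exists_Val (g := g) hQ hQ1 hΦ (x := fun k => ∑ i, B d h k i)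
      (fun k => Finset.sum_nonneg fun i _ => (hB1 d).nonneg h k i)
  choose B' h1 h2 using fun d => exists_concat g u (hB1 d) (C d) (hC1 d)
  have hB' : B' ∈ Fam Q ξ := mem_Fam.2 h1
  refine ⟨B', hB', ?_⟩
  have h3 := hsh (fun t => GG g t B') fun t => ⟨GG_nonneg hg hB' t, GG_le hQ1 hg hξ1 hB' t⟩
  simp only [GG, h2] at h3 ⊢
  rw [hΦ.sum] at h3
  simp only [hΦ.SL, ← hC2] at h3
  linarith

lemma Yf_Val_ge (hQ1 : ∀ k i, ∑ d, ∑ k', Q k i k' d = 1)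
    (hg : ∀ k i j, g k i j ∈ Icc (0:ℝ) 1)
    (hΦ : IsPhi Φ T)
    (hξ1 : ∑ d, ∑ k, ξ d k = 1)
    {B : D → List D → K → I → ℝ} (hB : B ∈ Fam Q ξ) (m : ℕ) {n : ℕ} (hn : 1 ≤ n)
    {c : ℝ} (hc : n * c ≤ ∑ t ∈ Finset.range n, GG g (m + t) B) :
    c - T / n ≤ Yf B m n (Val Q g Φ) := by
  have hB1 := mem_Fam.1 hB
  have hn0 : (0:ℝ) < n := by positivity
  have h1 : ∀ t, Φ (fun s => GG g (m + t + s) B) ≤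
      ∑ d, SL (m + t) (fun h => Val Q g Φ (fun k => ∑ i, B d h k i)) := by
    intro t
    simp only [GG, G_shift g (m + t)]
    rw [hΦ.sum]
    simp only [hΦ.SL]
    refine Finset.sum_le_sum fun d _ => SL_mono _ _ _ fun l => ?_
    exact le_Val hQ1 hΦ ((hB1 d).shift l)
  have h2 : ∑ t ∈ Finset.range n, GG g (m + t) B - T ≤
      Φ (fun s => ∑ t ∈ Finset.range n, GG g (m + t + s) B) := by
    rw [← hΦ.const (∑ t ∈ Finset.range n, GG g (m + t) B - T)]
    refine hΦ.mono _ _ fun s hs => ?_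
    have h3 : ∀ s : ℕ, ∑ t ∈ Finset.range n, GG g (m + t) B - s ≤
        ∑ t ∈ Finset.range n, GG g (m + t + s) B := by
      intro s
      induction s with
      | zero => simp
      | succ s ih =>
        have h4 := Finset.sum_range_succ (fun t => GG g (m + t + s) B) n
        have h5 := Finset.sum_range_succ' (fun t => GG g (m + t + s) B) n
        have h6 := GG_le hQ1 hg hξ1 hB (m + 0 + s)
        have h7 := GG_nonneg hg hB (m + n + s)
        have h8 : ∑ t ∈ Finset.range n, GG g (m + (t + 1) + s) B =
            ∑ t ∈ Finset.range n, GG g (m + t + (s + 1)) B :=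
          Finset.sum_congr rfl fun t _ => by congr 1; ring
        push_cast
        linarith
    have h4 : (s : ℝ) ≤ T := by exact_mod_cast hs.le
    have := h3 s
    linarith
  rw [hΦ.sum] at h2
  have h3 := Finset.sum_le_sum (s := Finset.range n) fun t _ => h1 t
  have h4 : n * (c - T / n) ≤ ∑ t ∈ Finset.range n,
      ∑ d, SL (m + t) (fun h => Val Q g Φ (fun k => ∑ i, B d h k i)) := by
    have : (n:ℝ) * (c - T / n) = n * c - T := by field_simp
    linarith
  unfold Yf
  rw [one_div, le_inv_mul_iff₀ hn0]
  exact h4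

theorem limit_value (hQ : ∀ k i k' d, 0 ≤ Q k i k' d)
    (hQ1 : ∀ k i, ∑ d, ∑ k', Q k i k' d = 1)
    (hg : ∀ k i j, g k i j ∈ Icc (0:ℝ) 1)
    (hξ : ∀ d k, 0 ≤ ξ d k)
    (hξ1 : ∑ d, ∑ k, ξ d k = 1)
    [Nonempty K] {v ε : ℝ} (hε : 0 < ε)
    (hv : ∀ n : ℕ, 1 ≤ n → ∃ m, ∃ B ∈ Fam Q ξ,
      n * (v - ε) ≤ ∑ t ∈ Finset.range n, GG g (m + t) B) :
    ∃ u : ℕ, ∀ (Φ : (ℕ → ℝ) → ℝ) (T : ℕ), IsPhi Φ T → ∀ δ,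
      (∀ t ≤ u, ∀ X : ℕ → ℝ, (∀ t, 0 ≤ X t ∧ X t ≤ 1) → Φ (fun s => X (t + s)) ≤ Φ X + δ) →
      ∃ B ∈ Fam Q ξ, v - 5 * ε - δ ≤ Φ (fun t => GG g t B) := by
  classical
  obtain ⟨s, F, hFs, hs0, hs1, hF⟩ := exists_cells K hε
  choose m B hB hmB using fun n : ℕ => hv (n + 1) (by omega)
  -- mass of the cells
  let cell : (K → ℝ) → (K → ℝ) → ℝ := fun e x => if F x = e then ∑ k, x k else 0
  let z : ℕ → s → ℝ := fun n e => Yf (B n) (m n) (n + 1) (cell e)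
  have hcell : ∀ e x, (∀ k, 0 ≤ x k) → 0 ≤ cell e x ∧ cell e x ≤ ∑ k, x k := by
    intro e x hx
    have := Finset.sum_nonneg (s := Finset.univ) fun k _ => hx k
    simp only [cell]; split_ifs <;> simp [this]
  have hzI : ∀ n, z n ∈ Set.univ.pi fun _ : s => Icc (0:ℝ) 1 := by
    intro n e _
    constructor
    · have h0 : Yf (B n) (m n) (n + 1) (fun _ => 0) = 0 := by simp [Yf, SL_zero]
      rw [← h0]
      exact Yf_mono (hB n) _ _ fun x hx => (hcell e x hx).1
    · rw [← Yf_mass hQ1 hξ1 (hB n) (m n) (n := n + 1) (by omega)]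
      exact Yf_mono (hB n) _ _ fun x hx => (hcell e x hx).2
  obtain ⟨z0, -, φ, hφ, hlim⟩ :=
    (isCompact_univ_pi fun _ : s => isCompact_Icc (a := (0:ℝ)) (b := 1)).tendsto_subseq hzI
  set M : ℝ := s.card + 1 with hM
  have hMpos : 0 < M := by positivity
  have hη : 0 < ε / (2 * M) := by positivity
  obtain ⟨N0, hN0⟩ := Metric.tendsto_atTop.1 hlim _ hη
  have hclose : ∀ n ≥ N0, ∀ e, |z (φ n) e - z (φ N0) e| ≤ ε / M := by
    intro n hn e
    have h1 := (dist_le_pi_dist (z (φ n)) z0 e).trans (hN0 n hn).le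
    have h2 := (dist_le_pi_dist (z (φ N0)) z0 e).trans (hN0 N0 le_rfl).le
    have h3 := dist_triangle_right (z (φ n) e) (z (φ N0) e) (z0 e)
    rw [Real.dist_eq] at h3
    have h4 : ε / M = ε / (2 * M) + ε / (2 * M) := by field_simp; ring
    linarith
  refine ⟨m (φ N0) + (φ N0 + 1), fun Φ T hΦ δ hsh => ?_⟩
  set V := Val Q g Φ with hV
  -- comparison with the cells
  have hVF : ∀ x : K → ℝ, (∀ k, 0 ≤ x k) →
      |V x - ∑ e ∈ s, V e * cell e x| ≤ ε * ∑ k, x k := by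
    intro x hx
    have h1 : ∑ e ∈ s, V e * cell e x = (∑ k, x k) * V (F x) := by
      simp only [cell, mul_ite, mul_zero]
      rw [Finset.sum_ite_eq]
      simp [hFs x, mul_comm]
    have hm := Finset.sum_nonneg (s := Finset.univ) fun k _ => hx k
    have hFx := hs0 _ (hFs x)
    rw [h1, ← Val_mul hQ hQ1 hg hΦ hFx hm]
    have hy : ∀ k, 0 ≤ (∑ k, x k) * F x k := fun k => mul_nonneg hm (hFx k)
    have h2 := Val_lip hQ hQ1 hg hΦ hx hy
    have h3 := Val_lip hQ hQ1 hg hΦ hy hx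
    have h4 := hF x hx
    have h5 : ∑ k, |(∑ k, x k) * F x k - x k| = ∑ k, |x k - (∑ k, x k) * F x k| :=
      Finset.sum_congr rfl fun k _ => abs_sub_comm _ _
    rw [abs_le]
    constructor <;> linarith
  have hYV : ∀ n, |Yf (B n) (m n) (n + 1) V - ∑ e : s, V e * z n e| ≤ ε := by
    intro n
    have hmass := Yf_mass hQ1 hξ1 (hB n) (m n) (n := n + 1) (by omega)
    have h0 : Yf (B n) (m n) (n + 1) (fun x => ∑ e ∈ s, V e * cell e x) = ∑ e : s, V e * z n e := by
      rw [Yf_sum, ← Finset.sum_coe_sort s (fun e => Yf (B n) (m n) (n + 1) fun x => V e * cell e x)]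
      exact Finset.sum_congr rfl fun e _ => Yf_mul _ _ _ _ _
    have h1 := Yf_mono (hB n) (m n) (n + 1) (f := V)
      (f' := fun x => ∑ e ∈ s, V e * cell e x + ε * ∑ k, x k)
      (fun x hx => by have := (abs_le.1 (hVF x hx)).2; linarith)
    have h2 := Yf_mono (hB n) (m n) (n + 1) (f' := fun x => V x + ε * ∑ k, x k)
      (f := fun x => ∑ e ∈ s, V e * cell e x)
      (fun x hx => by have := (abs_le.1 (hVF x hx)).1; linarith)
    rw [Yf_add, Yf_mul, hmass, h0] at h1
    rw [Yf_add (B n) (m n) (n + 1) V (fun x => ε * ∑ k, x k), Yf_mul, hmass, h0] at h2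
    rw [abs_le]
    constructor <;> linarith
  have hVe : ∀ e ∈ s, 0 ≤ V e ∧ V e ≤ 1 := fun e he => by
    have := Val_bounds hQ hQ1 hg hΦ (hs0 e he)
    rwa [hs1 e he] at this
  have hzz : ∀ n ≥ N0, ∑ e : s, V e * z (φ n) e ≤ ∑ e : s, V e * z (φ N0) e + ε := by
    intro n hn
    have h1 : ∀ e : s, V e * z (φ n) e ≤ V e * z (φ N0) e + ε / M := by
      intro e
      have h2 := (abs_le.1 (hclose n hn e)).2
      have h3 := hVe e e.2
      have h4 : 0 ≤ ε / M := by positivity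
      nlinarith
    refine (Finset.sum_le_sum fun e _ => h1 e).trans ?_
    rw [Finset.sum_add_distrib, Finset.sum_const, Finset.card_univ, Fintype.card_coe, nsmul_eq_mul]
    have : (s.card : ℝ) * (ε / M) ≤ ε := by
      rw [← mul_div_assoc, div_le_iff₀ hMpos]
      nlinarith
    linarith
  -- a far away index
  obtain ⟨n', hn'1, hn'2⟩ : ∃ n' ≥ N0, (T:ℝ) / ((n' : ℝ) + 1) ≤ ε := by
    obtain ⟨n1, hn1⟩ := exists_nat_ge ((T:ℝ) / ε)
    refine ⟨max N0 n1, le_max_left _ _, ?_⟩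
    have h1 : (n1 : ℝ) ≤ (max N0 n1 : ℕ) := by exact_mod_cast le_max_right _ _
    rw [div_le_iff₀ (by positivity)]
    rw [div_le_iff₀ hε] at hn1
    nlinarith
  have hfar : v - 2 * ε ≤ Yf (B (φ n')) (m (φ n')) (φ n' + 1) V := by
    have h1 := Yf_Val_ge hQ1 hg hΦ hξ1 (hB (φ n')) (m (φ n')) (n := φ n' + 1) (by omega)
      (c := v - ε) (hmB (φ n'))
    have h2 : (T:ℝ) / ((φ n' + 1 : ℕ) : ℝ) ≤ (T:ℝ) / ((n' : ℝ) + 1) := by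
      push_cast
      have : (n' : ℝ) ≤ φ n' := by exact_mod_cast hφ.id_le n'
      gcongr
    linarith
  have hnear : v - 5 * ε ≤ Yf (B (φ N0)) (m (φ N0)) (φ N0 + 1) V := by
    have h1 := (abs_le.1 (hYV (φ n'))).2
    have h2 := (abs_le.1 (hYV (φ N0))).1
    have h3 := hzz n' hn'1
    linarith
  -- conclusion
  by_contra hcon
  push Not at hcon
  set n := φ N0
  have hup : ∀ t ∈ Finset.range (n + 1),
      ∑ d, SL (m n + t) (fun h => V (fun k => ∑ i, B n d h k i)) < v - 5 * ε := by
    intro t ht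
    rw [Finset.mem_range] at ht
    obtain ⟨B', hB', h1⟩ := exists_ge_Yf hQ hQ1 hg hΦ (hB n) (m n + t)
      (hsh (m n + t) (by omega)) hξ1
    have h2 := hcon B' hB'
    linarith
  have hlt := Finset.sum_lt_sum_of_nonempty (Finset.nonempty_range_iff.2 (Nat.succ_ne_zero n)) hup
  rw [Finset.sum_const, Finset.card_range, nsmul_eq_mul] at hlt
  have hn0 : (0:ℝ) < ((n + 1 : ℕ) : ℝ) := by positivity
  unfold Yf at hnear
  rw [one_div, le_inv_mul_iff₀ hn0] at hnear
  linarith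

end Main
end Stmt19

open Set
set_option linter.unusedSectionVars false
set_option linter.unusedVariables false
namespace Stmt19

section Windows

lemma window_shift (X : ℕ → ℝ) (hX : ∀ t, 0 ≤ X t ∧ X t ≤ 1) (N j t : ℕ) :
    ∑ r ∈ Finset.range N, X (t + (j + r)) ≤ ∑ r ∈ Finset.range N, X (j + r) + t := by
  induction t with
  | zero => simp
  | succ t ih =>
    have h1 := Finset.sum_range_succ (fun r => X (t + (j + r))) N
    have h2 := Finset.sum_range_succ' (fun r => X (t + (j + r))) N
    have h3 : ∑ r ∈ Finset.range N, X (t + 1 + (j + r)) =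
        ∑ r ∈ Finset.range N, X (t + (j + (r + 1))) :=
      Finset.sum_congr rfl fun r _ => by congr 1; ring
    have h4 := (hX (t + (j + 0))).1
    have h5 := (hX (t + (j + N))).2
    push_cast
    linarith

lemma block_window {n : ℕ} (hn : 1 ≤ n) (y : ℕ → ℝ) (hy : ∀ t, 0 ≤ y t) {c : ℝ}
    (h : ∀ b : ℕ, ∑ t ∈ Finset.range n, y (b * n + t) ≤ c) (L m : ℕ) :
    ∑ r ∈ Finset.range (L * n), y (m + r) ≤ (L + 1) * c := by
  have h1 : ∀ L b : ℕ, ∑ r ∈ Finset.range (L * n), y (b * n + r) ≤ L * c := by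
    intro L b
    induction L with
    | zero => simp
    | succ L ih =>
      rw [Nat.succ_mul, Finset.sum_range_add]
      have h2 := h (b + L)
      have h3 : ∑ t ∈ Finset.range n, y (b * n + (L * n + t)) =
          ∑ t ∈ Finset.range n, y ((b + L) * n + t) :=
        Finset.sum_congr rfl fun r _ => by congr 1; ring
      rw [h3]
      push_cast
      linarith
  have h2 := h1 (L + 1) (m / n)
  push_cast at h2
  refine le_trans ?_ h2
  have h3 : (L + 1) * n = m % n + (L * n + (n - m % n)) := by
    have := Nat.mod_lt m (show 0 < n by omega)
    rw [Nat.succ_mul]; omega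
  rw [h3, Finset.sum_range_add]
  have h4 : ∑ r ∈ Finset.range (L * n), y (m + r) ≤
      ∑ x ∈ Finset.range (L * n + (n - m % n)), y (m / n * n + (m % n + x)) := by
    rw [Finset.sum_range_add]
    have h5 : ∑ r ∈ Finset.range (L * n), y (m + r) =
        ∑ r ∈ Finset.range (L * n), y (m / n * n + (m % n + r)) :=
      Finset.sum_congr rfl fun r _ => by
        congr 1
        have := Nat.div_add_mod' m n
        omega
    rw [h5]
    have := Finset.sum_nonneg (s := Finset.range (n - m % n))
      fun x _ => hy (m / n * n + (m % n + (L * n + x)))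
    linarith
  have := Finset.sum_nonneg (s := Finset.range (m % n)) fun x _ => hy (m / n * n + x)
  linarith

lemma IsEval.summable {θ : ℕ → ℝ} (hθ : IsEval θ) : Summable θ := by
  by_contra h
  have := hθ.2
  rw [tsum_eq_zero_of_not_summable h] at this
  norm_num at this

lemma sliding_lower {θ : ℕ → ℝ} (hθ : IsEval θ) {x : ℕ → ℝ} (hx : ∀ t, 0 ≤ x t ∧ x t ≤ 1)
    {N : ℕ} (hN : 1 ≤ N) {c : ℝ} (h : ∀ m, N * c ≤ ∑ r ∈ Finset.range N, x (m + r)) :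
    c - N * impatience θ ≤ ∑' t, θ t * x t := by
  have hs := hθ.summable
  have hs1 : Summable fun t => θ (t + 1) := (summable_nat_add_iff 1).2 hs
  have hsx : ∀ s, Summable fun t => θ t * x (t + s) := fun s =>
    hs.of_nonneg_of_le (fun t => mul_nonneg (hθ.1 t) (hx _).1)
      fun t => mul_le_of_le_one_right (hθ.1 t) (hx _).2
  have hsd : Summable fun t => |θ (t + 1) - θ t| := (hs1.sub hs).abs
  have step : ∀ s, ∑' t, θ t * x (t + (s + 1)) - impatience θ ≤ ∑' t, θ t * x (t + s) := by
    intro s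
    rw [(hsx s).tsum_eq_zero_add]
    have h0 : 0 ≤ θ 0 * x (0 + s) := mul_nonneg (hθ.1 0) (hx _).1
    have hA : Summable fun t => θ (t + 1) * x (t + 1 + s) := (summable_nat_add_iff 1).2 (hsx s)
    have h1 : ∑' t, θ t * x (t + (s + 1)) ≤
        ∑' t, (θ (t + 1) * x (t + 1 + s) + |θ (t + 1) - θ t|) := by
      refine (hsx (s + 1)).tsum_le_tsum (fun t => ?_) (hA.add hsd)
      have e : t + (s + 1) = t + 1 + s := by ring
      rw [e]
      have h2 := hx (t + 1 + s)
      have h3 := neg_abs_le (θ (t + 1) - θ t)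
      have h4 := abs_nonneg (θ (t + 1) - θ t)
      nlinarith
    rw [hA.tsum_add hsd] at h1
    unfold impatience
    linarith
  have steps : ∀ s : ℕ, ∑' t, θ t * x (t + s) - s * impatience θ ≤ ∑' t, θ t * x t := by
    intro s
    induction s with
    | zero => simp
    | succ s ih => have := step s; push_cast; linarith
  have hi : 0 ≤ impatience θ := tsum_nonneg fun t => abs_nonneg _
  have h1 : (N:ℝ) * c ≤ ∑ s ∈ Finset.range N, ∑' t, θ t * x (t + s) := by
    rw [← Summable.tsum_finsetSum fun s _ => hsx s]
    have h2 : (N:ℝ) * c = ∑' t, θ t * (N * c) := by rw [tsum_mul_right, hθ.2, one_mul]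
    rw [h2]
    refine (hs.mul_right _).tsum_le_tsum (fun t => ?_) (summable_sum fun s _ => hsx s)
    rw [← Finset.mul_sum]
    exact mul_le_mul_of_nonneg_left (h t) (hθ.1 t)
  have h2 : ∑ s ∈ Finset.range N, ∑' t, θ t * x (t + s) ≤
      ∑ s ∈ Finset.range N, (∑' t, θ t * x t + N * impatience θ) := by
    refine Finset.sum_le_sum fun s hs => ?_
    have h3 := steps s
    have h4 : (s:ℝ) ≤ N := by exact_mod_cast (Finset.mem_range.1 hs).le
    nlinarith
  rw [Finset.sum_const, Finset.card_range, nsmul_eq_mul] at h2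
  have hN0 : (0:ℝ) < N := by exact_mod_cast hN
  have h3 := h1.trans h2
  have := le_of_mul_le_mul_left h3 hN0
  linarith

lemma sliding_upper {θ : ℕ → ℝ} (hθ : IsEval θ) {x : ℕ → ℝ} (hx : ∀ t, 0 ≤ x t ∧ x t ≤ 1)
    {N : ℕ} (hN : 1 ≤ N) {c : ℝ} (h : ∀ m, ∑ r ∈ Finset.range N, x (m + r) ≤ N * c) :
    ∑' t, θ t * x t ≤ c + N * impatience θ := by
  have h1 := sliding_lower hθ (x := fun t => 1 - x t) (fun t => ⟨by linarith [(hx t).2],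
    by linarith [(hx t).1]⟩) hN (c := 1 - c) (fun m => by
      rw [Finset.sum_sub_distrib]; simp; linarith [h m])
  have hs := hθ.summable
  have hsx : Summable fun t => θ t * x t :=
    hs.of_nonneg_of_le (fun t => mul_nonneg (hθ.1 t) (hx _).1)
      fun t => mul_le_of_le_one_right (hθ.1 t) (hx _).2
  simp only [mul_sub, mul_one] at h1
  rw [hs.tsum_sub hsx, hθ.2] at h1
  linarith

end Windows

section Players
variable {K I J D : Type*} [Fintype K] [Fintype I] [Fintype J] [Fintype D] [Nonempty J]
  [Nonempty I]

lemma player1_windows [Nonempty K] {Q : K → I → K → D → ℝ} (hQ : ∀ k i k' d, 0 ≤ Q k i k' d)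
    (hQ1 : ∀ k i, ∑ d, ∑ k', Q k i k' d = 1)
    {g : K → I → J → ℝ} (hg : ∀ k i j, g k i j ∈ Icc (0:ℝ) 1)
    {ξ : D → K → ℝ} (hξ : ∀ d k, 0 ≤ ξ d k) (hξ1 : ∑ d, ∑ k, ξ d k = 1)
    {v ε : ℝ} (hε : 0 < ε)
    (hv : ∀ n : ℕ, 1 ≤ n → ∃ m, ∃ B ∈ Fam Q ξ,
      n * (v - ε) ≤ ∑ t ∈ Finset.range n, GG g (m + t) B) :
    ∃ N : ℕ, 1 ≤ N ∧ ∃ B ∈ Fam Q ξ, ∀ m,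
      N * (v - 6 * ε) ≤ ∑ r ∈ Finset.range N, GG g (m + r) B := by
  obtain ⟨u, hu⟩ := limit_value hQ hQ1 hg hξ hξ1 hε hv
  obtain ⟨N, hN⟩ := exists_nat_ge ((u:ℝ) / ε + 1)
  have hN1 : 1 ≤ N := by
    have : (1:ℝ) ≤ N := le_trans (by have : (0:ℝ) ≤ (u:ℝ) / ε := by positivity
                                     linarith) hN
    exact_mod_cast this
  have hN0 : (0:ℝ) < N := by exact_mod_cast hN1
  have huN : (u:ℝ) / N ≤ ε := by
    rw [div_le_iff₀ hN0]
    have : (u:ℝ) / ε ≤ N := by linarith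
    rw [div_le_iff₀ hε] at this
    linarith
  have key := minimax_seq (Fam_nonempty hQ hξ) (isCompact_Fam hQ1 ξ) (convex_Fam Q ξ)
    (fun m B => ∑ r ∈ Finset.range N, (1 / (N:ℝ)) * GG g (m + r) B)
    (fun m => continuous_finsetSum _ fun r _ => continuous_const.mul (GG_continuous g (m + r)))
    (fun m => by
      have := fun r => (GG_concave g (m + r) Q ξ).smul (c := 1 / (N:ℝ)) (by positivity)
      refine ⟨convex_Fam Q ξ, ?_⟩
      intro B hB B' hB' a b ha hb hab
      simp only [smul_eq_mul, Finset.mul_sum]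
      rw [← Finset.sum_add_distrib]
      refine Finset.sum_le_sum fun r _ => ?_
      have h := (this r).2 hB hB' ha hb hab
      simpa only [smul_eq_mul] using h) (v - 6 * ε) ?_
  · obtain ⟨B, hB, h⟩ := key
    refine ⟨N, hN1, B, hB, fun m => ?_⟩
    have h1 := h m
    rw [← Finset.mul_sum, one_div, le_inv_mul_iff₀ hN0] at h1
    exact h1
  · intro M ρ hρ
    have hφ : IsPhi (fun X => ∑ j : Fin (M + 1), ρ j * ∑ r ∈ Finset.range N,
        (1 / (N:ℝ)) * X ((j:ℕ) + r)) (M + 1 + N) := by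
      refine ⟨fun X X' h => ?_, fun X X' => ?_, fun c X => ?_, ?_, ?_⟩
      · refine Finset.sum_le_sum fun j _ => mul_le_mul_of_nonneg_left ?_ (hρ.1 j)
        refine Finset.sum_le_sum fun r hr => mul_le_mul_of_nonneg_left (h _ ?_) (by positivity)
        have := j.2
        have := Finset.mem_range.1 hr
        omega
      · simp only [mul_add, Finset.sum_add_distrib]
      · simp only [Finset.mul_sum]
        refine Finset.sum_congr rfl fun j _ => Finset.sum_congr rfl fun r _ => by ring
      · simp only [mul_one, Finset.sum_const, Finset.card_range, nsmul_eq_mul]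
        rw [mul_one_div_cancel hN0.ne']
        simpa using hρ.2
      · fun_prop
    obtain ⟨B, hB, h⟩ := hu _ _ hφ ε (by
      intro t ht X hX
      have h1 : ∀ j : Fin (M + 1), ρ j * ∑ r ∈ Finset.range N, (1 / (N:ℝ)) * X (t + ((j:ℕ) + r)) ≤
          ρ j * ∑ r ∈ Finset.range N, (1 / (N:ℝ)) * X ((j:ℕ) + r) + ρ j * ε := by
        intro j
        rw [← mul_add]
        refine mul_le_mul_of_nonneg_left ?_ (hρ.1 j)
        rw [← Finset.mul_sum, ← Finset.mul_sum]
        have h2 := window_shift X hX N j t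
        have h3 : (1 / (N:ℝ)) * t ≤ ε := by
          refine le_trans ?_ huN
          rw [one_div, inv_mul_eq_div]
          have : (t:ℝ) ≤ u := by exact_mod_cast ht
          gcongr
        have h4 := mul_le_mul_of_nonneg_left h2 (show 0 ≤ 1 / (N:ℝ) by positivity)
        rw [mul_add] at h4
        linarith
      have h2 := Finset.sum_le_sum (s := Finset.univ) fun j _ => h1 j
      rw [Finset.sum_add_distrib, ← Finset.sum_mul, hρ.2, one_mul] at h2
      exact h2)
    refine ⟨B, hB, ?_⟩
    linarith

lemma LL_congr (g : K → I → J → ℝ) (t : ℕ) (B : D → List D → K → I → ℝ) (τ τ' : List D → J → ℝ)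
    (h : ∀ l, l.length = t + 1 → τ l = τ' l) : LL g t B τ = LL g t B τ' := by
  unfold LL
  refine Finset.sum_congr rfl fun d _ => SL_congr _ _ _ fun l hl => ?_
  rw [h (d :: l) (by simp [hl])]

lemma player2_windows {Q : K → I → K → D → ℝ} (hQ : ∀ k i k' d, 0 ≤ Q k i k' d)
    (hQ1 : ∀ k i, ∑ d, ∑ k', Q k i k' d = 1)
    (g : K → I → J → ℝ) {ξ : D → K → ℝ} (hξ : ∀ d k, 0 ≤ ξ d k)
    {v ε : ℝ} (hε : 0 < ε) {n : ℕ} (hn : 1 ≤ n)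
    (hv : ∀ m, ∀ B ∈ Fam Q ξ, ∑ t ∈ Finset.range n, GG g (m + t) B ≤ n * (v + ε)) :
    ∃ N : ℕ, 1 ≤ N ∧ ∃ τ : List D → J → ℝ, (∀ l, τ l ∈ stdSimplex ℝ J) ∧
      ∀ B ∈ Fam Q ξ, (∀ t, 0 ≤ LL g t B τ) →
        ∀ m, ∑ r ∈ Finset.range N, LL g (m + r) B τ ≤ N * (v + 2 * ε) := by
  choose τ hτ hτB using fun b : ℕ => minimax_block hQ hQ1 g hξ (b * n) n _ (hv (b * n))
  obtain ⟨L, hL⟩ := exists_nat_ge ((|v + ε|) / ε + 1)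
  have hL1 : 1 ≤ L := by
    have : (1:ℝ) ≤ L := le_trans (by have : (0:ℝ) ≤ (|v + ε|) / ε := by positivity
                                     linarith) hL
    exact_mod_cast this
  have hLv : v + ε ≤ L * ε := by
    have : (|v + ε|) / ε ≤ L := by linarith
    rw [div_le_iff₀ hε] at this
    exact (le_abs_self _).trans this
  refine ⟨L * n, by nlinarith, fun l => τ ((l.length - 1) / n) l, fun l => hτ _ _, ?_⟩
  intro B hB h0 m
  have h1 := block_window hn (fun t => LL g t B fun l => τ ((l.length - 1) / n) l) h0
    (c := n * (v + ε)) (fun b => by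
      refine le_trans (le_of_eq ?_) (hτB b B hB)
      refine Finset.sum_congr rfl fun t ht => LL_congr g _ B _ _ fun l hl => ?_
      have : (l.length - 1) / n = b := by
        rw [hl, Nat.add_sub_cancel, mul_comm, Nat.mul_add_div (by omega),
          Nat.div_eq_of_lt (Finset.mem_range.1 ht), add_zero]
      rw [this]) L m
  refine h1.trans ?_
  have : (0:ℝ) ≤ n := by positivity
  push_cast
  nlinarith

/-- The value. -/
lemma exists_value {Q : K → I → K → D → ℝ} (hQ : ∀ k i k' d, 0 ≤ Q k i k' d)
    (hQ1 : ∀ k i, ∑ d, ∑ k', Q k i k' d = 1)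
    {g : K → I → J → ℝ} (hg : ∀ k i j, g k i j ∈ Icc (0:ℝ) 1)
    {ξ : D → K → ℝ} (hξ : ∀ d k, 0 ≤ ξ d k) (hξ1 : ∑ d, ∑ k, ξ d k = 1) :
    ∃ v : ℝ, (∀ ε > 0, ∃ n : ℕ, 1 ≤ n ∧ ∀ m, ∀ B ∈ Fam Q ξ,
        ∑ t ∈ Finset.range n, GG g (m + t) B ≤ n * (v + ε)) ∧
      ∀ ε > 0, ∀ n : ℕ, 1 ≤ n → ∃ m, ∃ B ∈ Fam Q ξ,
        n * (v - ε) ≤ ∑ t ∈ Finset.range n, GG g (m + t) B := by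
  set S : Set ℝ := {c | ∃ n : ℕ, 1 ≤ n ∧ ∀ m, ∀ B ∈ Fam Q ξ,
        ∑ t ∈ Finset.range n, GG g (m + t) B ≤ n * c} with hS
  have hne : S.Nonempty := by
    refine ⟨1, 1, le_rfl, fun m B hB => ?_⟩
    simpa using GG_le hQ1 hg hξ1 hB m
  have hbd : BddBelow S := by
    refine ⟨0, ?_⟩
    rintro c ⟨n, hn, h⟩
    obtain ⟨B, hB⟩ := Fam_nonempty (I := I) hQ hξ
    have h1 := h 0 B hB
    have h2 := Finset.sum_nonneg (s := Finset.range n) fun t _ => GG_nonneg hg hB (0 + t)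
    have hn0 : (0:ℝ) < n := by exact_mod_cast hn
    by_contra hc
    push Not at hc
    nlinarith
  refine ⟨sInf S, fun ε hε => ?_, fun ε hε n hn => ?_⟩
  · obtain ⟨c, ⟨n, hn, h⟩, hc⟩ := exists_lt_of_csInf_lt hne (show sInf S < sInf S + ε by linarith)
    refine ⟨n, hn, fun m B hB => (h m B hB).trans ?_⟩
    gcongr
  · by_contra hcon
    push Not at hcon
    have : sInf S - ε ∈ S := ⟨n, hn, fun m B hB => (hcon m B hB).le⟩
    have := csInf_le hbd this
    linarith

end Players
end Stmt19

open Set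
set_option linter.unusedSectionVars false
set_option linter.unusedVariables false
namespace Stmt19

section Expect
variable {K I J C D : Type*} [Fintype K] [Fintype I] [Fintype J] [Fintype C] [Fintype D]

/-- Expectation at stage `t` of a function of the joint history. -/
noncomputable def EE (q : K → I → J → (K × C × D → ℝ)) (π : K × C × D → ℝ)
    (σ : List (C × I) → C → (I → ℝ)) (τ : List (D × J) → D → (J → ℝ)) (t : ℕ)
    (f : K × (List (C × I) × C) × (List (D × J) × D) → ℝ) : ℝ :=
  Finsupp.linearCombination ℝ f (hist q π σ τ t)

/-- Conditional expectation of `f` at the next stage. -/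
noncomputable def nextE (q : K → I → J → (K × C × D → ℝ))
    (σ : List (C × I) → C → (I → ℝ)) (τ : List (D × J) → D → (J → ℝ))
    (f : K × (List (C × I) × C) × (List (D × J) × D) → ℝ)
    (st : K × (List (C × I) × C) × (List (D × J) × D)) : ℝ :=
  ∑ i, ∑ j, ∑ y : K × C × D, σ st.2.1.1 st.2.1.2 i * τ st.2.2.1 st.2.2.2 j * q st.1 i j y *
    f (y.1, (st.2.1.1 ++ [(st.2.1.2, i)], y.2.1), (st.2.2.1 ++ [(st.2.2.2, j)], y.2.2))

/-- States compatible with the information structure. -/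
def Good (kt : C → K) (dt : C → D) (t : ℕ)
    (st : K × (List (C × I) × C) × (List (D × J) × D)) : Prop :=
  kt st.2.1.2 = st.1 ∧ dt st.2.1.2 = st.2.2.2 ∧
    st.2.1.1.map (fun a => dt a.1) = st.2.2.1.map Prod.fst ∧ st.2.2.1.length = t

variable (q : K → I → J → (K × C × D → ℝ)) (π : K × C × D → ℝ)
    (σ : List (C × I) → C → (I → ℝ)) (τ : List (D × J) → D → (J → ℝ))

lemma EE_sum {ι : Type*} (s : Finset ι) (t : ℕ)
    (f : ι → K × (List (C × I) × C) × (List (D × J) × D) → ℝ) :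
    EE q π σ τ t (fun st => ∑ a ∈ s, f a st) = ∑ a ∈ s, EE q π σ τ t (f a) := by
  simp only [EE, Finsupp.linearCombination_apply, Finsupp.sum, Finset.smul_sum]
  rw [Finset.sum_comm]

lemma EE_mul (t : ℕ) (c : ℝ) (f : K × (List (C × I) × C) × (List (D × J) × D) → ℝ) :
    EE q π σ τ t (fun st => c * f st) = c * EE q π σ τ t f := by
  simp only [EE, Finsupp.linearCombination_apply, Finsupp.sum, Finset.mul_sum, smul_eq_mul]
  exact Finset.sum_congr rfl fun _ _ => by ring

lemma EE_SL {A : Type*} [Fintype A] (t n : ℕ)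
    (f : List A → K × (List (C × I) × C) × (List (D × J) × D) → ℝ) :
    EE q π σ τ t (fun st => SL n (fun l => f l st)) = SL n (fun l => EE q π σ τ t (f l)) := by
  induction n generalizing f with
  | zero => rfl
  | succ n ih => simp only [SL, EE_sum, ih]

lemma EE_zero (f : K × (List (C × I) × C) × (List (D × J) × D) → ℝ) :
    EE q π σ τ 0 f = ∑ x : K × C × D, π x * f (x.1, ([], x.2.1), ([], x.2.2)) := by
  simp only [EE, hist, map_sum, Finsupp.linearCombination_single, smul_eq_mul]

lemma EE_succ (t : ℕ) (f : K × (List (C × I) × C) × (List (D × J) × D) → ℝ) :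
    EE q π σ τ (t + 1) f = EE q π σ τ t (nextE q σ τ f) := by
  simp only [EE, hist, map_finsuppSum, map_sum, Finsupp.linearCombination_single, smul_eq_mul]
  rw [Finsupp.linearCombination_apply]
  refine Finsupp.sum_congr fun st _ => ?_
  simp only [nextE, smul_eq_mul, Finset.mul_sum]
  refine Finset.sum_congr rfl fun i _ => Finset.sum_congr rfl fun j _ =>
    Finset.sum_congr rfl fun y _ => by ring

lemma stagePay_eq (g : K → I → J → ℝ) (t : ℕ) :
    stagePay q g π σ τ t = EE q π σ τ t (fun st => ∑ i, ∑ j,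
      σ st.2.1.1 st.2.1.2 i * τ st.2.2.1 st.2.2.2 j * g st.1 i j) := by
  simp only [EE, stagePay, Finsupp.linearCombination_apply, smul_eq_mul, Finset.mul_sum]
  refine Finsupp.sum_congr fun st _ => Finset.sum_congr rfl fun i _ =>
    Finset.sum_congr rfl fun j _ => by ring

variable {q π σ τ} (hq : ∀ k i j, q k i j ∈ Δ (K × C × D)) (hπ : π ∈ Δ (K × C × D))
  {kt : C → K} {dt : C → D}
  (hq1 : ∀ (k : K) (i : I) (j : J) (k' : K) (c' : C) (d' : D),
      ¬(kt c' = k' ∧ dt c' = d') → q k i j (k', c', d') = 0)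
  (hπ1 : ∀ (k : K) (c : C) (d : D), ¬(kt c = k ∧ dt c = d) → π (k, c, d) = 0)
  (hσ : IsStrat1 σ) (hτ : IsStrat2 τ)

lemma EE_mono (hq : ∀ k i j, q k i j ∈ Δ (K × C × D))
    (hπ : π ∈ Δ (K × C × D))
    (hq1 : ∀ (k : K) (i : I) (j : J) (k' : K) (c' : C) (d' : D), ¬(kt c' = k' ∧ dt c' = d') → q k i j (k', c', d') = 0)
    (hπ1 : ∀ (k : K) (c : C) (d : D), ¬(kt c = k ∧ dt c = d) → π (k, c, d) = 0)
    (hσ : IsStrat1 σ)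
    (hτ : IsStrat2 τ)
    (t : ℕ) (f f' : K × (List (C × I) × C) × (List (D × J) × D) → ℝ)
    (h : ∀ st, Good kt dt t st → f st ≤ f' st) : EE q π σ τ t f ≤ EE q π σ τ t f' := by
  induction t generalizing f f' with
  | zero =>
    rw [EE_zero, EE_zero]
    refine Finset.sum_le_sum fun x _ => ?_
    by_cases hx : kt x.2.1 = x.1 ∧ dt x.2.1 = x.2.2
    · exact mul_le_mul_of_nonneg_left (h _ ⟨hx.1, hx.2, rfl, rfl⟩) (hπ.1 x)
    · have : π x = 0 := hπ1 x.1 x.2.1 x.2.2 hx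
      simp [this]
  | succ t ih =>
    rw [EE_succ, EE_succ]
    refine ih _ _ fun st hst => ?_
    unfold nextE
    refine Finset.sum_le_sum fun i _ => Finset.sum_le_sum fun j _ => Finset.sum_le_sum fun y _ => ?_
    by_cases hx : kt y.2.1 = y.1 ∧ dt y.2.1 = y.2.2
    · refine mul_le_mul_of_nonneg_left (h _ ⟨hx.1, hx.2, ?_, ?_⟩)
        (mul_nonneg (mul_nonneg ((hσ _ _).1 _) ((hτ _ _).1 _)) ((hq _ _ _).1 _))
      · simp [hst.2.2.1, hst.2.1]
      · simp [hst.2.2.2]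
    · have : q st.1 i j y = 0 := hq1 _ _ _ y.1 y.2.1 y.2.2 hx
      simp [this]

lemma EE_congr (hq : ∀ k i j, q k i j ∈ Δ (K × C × D))
    (hπ : π ∈ Δ (K × C × D))
    (hq1 : ∀ (k : K) (i : I) (j : J) (k' : K) (c' : C) (d' : D), ¬(kt c' = k' ∧ dt c' = d') → q k i j (k', c', d') = 0)
    (hπ1 : ∀ (k : K) (c : C) (d : D), ¬(kt c = k ∧ dt c = d) → π (k, c, d) = 0)
    (hσ : IsStrat1 σ)
    (hτ : IsStrat2 τ)
    (t : ℕ) (f f' : K × (List (C × I) × C) × (List (D × J) × D) → ℝ)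
    (h : ∀ st, Good kt dt t st → f st = f' st) : EE q π σ τ t f = EE q π σ τ t f' :=
  le_antisymm (EE_mono hq hπ hq1 hπ1 hσ hτ t _ _ fun st hst => (h st hst).le)
    (EE_mono hq hπ hq1 hπ1 hσ hτ t _ _ fun st hst => (h st hst).ge)

lemma EE_nonneg (hq : ∀ k i j, q k i j ∈ Δ (K × C × D))
    (hπ : π ∈ Δ (K × C × D))
    (hq1 : ∀ (k : K) (i : I) (j : J) (k' : K) (c' : C) (d' : D), ¬(kt c' = k' ∧ dt c' = d') → q k i j (k', c', d') = 0)
    (hπ1 : ∀ (k : K) (c : C) (d : D), ¬(kt c = k ∧ dt c = d) → π (k, c, d) = 0)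
    (hσ : IsStrat1 σ)
    (hτ : IsStrat2 τ)
    (t : ℕ) (f : K × (List (C × I) × C) × (List (D × J) × D) → ℝ)
    (h : ∀ st, 0 ≤ f st) : 0 ≤ EE q π σ τ t f := by
  have h0 := EE_mul q π σ τ t 0 (fun _ => 1)
  simp only [zero_mul] at h0
  exact h0.ge.trans (EE_mono hq hπ hq1 hπ1 hσ hτ t _ _ fun st _ => h st)

lemma EE_one (hq : ∀ k i j, q k i j ∈ Δ (K × C × D))
    (hπ : π ∈ Δ (K × C × D))
    (hσ : IsStrat1 σ)
    (hτ : IsStrat2 τ)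
    (t : ℕ) : EE q π σ τ t (fun _ => 1) = 1 := by
  induction t with
  | zero => simp [EE_zero, hπ.2]
  | succ t ih =>
    rw [EE_succ]
    have : nextE q σ τ (fun _ => 1) = fun _ => 1 := by
      funext st
      simp only [nextE, mul_one, ← Finset.mul_sum, (hq _ _ _).2, (hτ _ _).2, (hσ _ _).2]
    rw [this, ih]

lemma stagePay_mem (hq : ∀ k i j, q k i j ∈ Δ (K × C × D))
    (hπ : π ∈ Δ (K × C × D))
    (hq1 : ∀ (k : K) (i : I) (j : J) (k' : K) (c' : C) (d' : D), ¬(kt c' = k' ∧ dt c' = d') → q k i j (k', c', d') = 0)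
    (hπ1 : ∀ (k : K) (c : C) (d : D), ¬(kt c = k ∧ dt c = d) → π (k, c, d) = 0)
    (hσ : IsStrat1 σ)
    (hτ : IsStrat2 τ)
    {g : K → I → J → ℝ} (hg : ∀ k i j, g k i j ∈ Icc (0:ℝ) 1) (t : ℕ) :
    0 ≤ stagePay q g π σ τ t ∧ stagePay q g π σ τ t ≤ 1 := by
  rw [stagePay_eq]
  constructor
  · refine EE_nonneg hq hπ hq1 hπ1 hσ hτ t _ fun st => ?_
    exact Finset.sum_nonneg fun i _ => Finset.sum_nonneg fun j _ =>
      mul_nonneg (mul_nonneg ((hσ _ _).1 _) ((hτ _ _).1 _)) (hg _ _ _).1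
  · rw [← EE_one hq hπ hσ hτ t]
    refine EE_mono hq hπ hq1 hπ1 hσ hτ t _ _ fun st _ => ?_
    calc _ ≤ ∑ i, ∑ j, σ st.2.1.1 st.2.1.2 i * τ st.2.2.1 st.2.2.2 j :=
          Finset.sum_le_sum fun i _ => Finset.sum_le_sum fun j _ =>
            mul_le_of_le_one_right (mul_nonneg ((hσ _ _).1 _) ((hτ _ _).1 _)) (hg _ _ _).2
      _ = 1 := by simp only [← Finset.mul_sum, (hτ _ _).2, mul_one, (hσ _ _).2]

end Expect

section Words

lemma SL_single {A : Type*} [Fintype A] [DecidableEq A] (t : ℕ) (w : List A) (hw : w.length = t)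
    (F : List A → ℝ) : SL t (fun l => if w = l then F l else 0) = F w := by
  induction t generalizing w F with
  | zero => simp [SL, List.length_eq_zero_iff.1 hw]
  | succ t ih =>
    obtain ⟨a, w, rfl⟩ : ∃ a w', w = a :: w' := by
      cases w with
      | nil => simp at hw
      | cons a w => exact ⟨a, w, rfl⟩
    simp only [List.length_cons, Nat.add_right_cancel_iff] at hw
    simp only [SL]
    rw [Finset.sum_eq_single a]
    · have := ih w hw (fun l => F (a :: l))
      rw [← this]
      exact SL_congr _ _ _ fun l _ => by simp
    · intro b _ hb
      refine Eq.trans (SL_congr _ _ _ fun l _ => ?_) (SL_zero (A := A) t)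
      rw [if_neg]
      intro h
      exact hb (List.cons.inj h).1.symm
    · simp

variable {J D : Type*} [Fintype J] [Fintype D]

/-- Weight of the actions of player 2 along a word. -/
def Tacc (τ : List (D × J) → D → (J → ℝ)) : List (D × J) → List (D × J) → ℝ
  | _, [] => 1
  | p, a :: l => τ p a.1 a.2 * Tacc τ (p ++ [a]) l

lemma Tacc_snoc (τ : List (D × J) → D → (J → ℝ)) (p l : List (D × J)) (a : D × J) :
    Tacc τ p (l ++ [a]) = Tacc τ p l * τ (p ++ l) a.1 a.2 := by
  induction l generalizing p with
  | nil => simp [Tacc]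
  | cons b l ih => simp [Tacc, ih, mul_assoc]

lemma Tacc_nonneg {τ : List (D × J) → D → (J → ℝ)} (hτ : IsStrat2 τ) (p l : List (D × J)) :
    0 ≤ Tacc τ p l := by
  induction l generalizing p with
  | nil => simp [Tacc]
  | cons b l ih => exact mul_nonneg ((hτ _ _).1 _) (ih _)

lemma SL_Tacc {τ : List (D × J) → D → (J → ℝ)} (hτ : IsStrat2 τ) (t : ℕ) (F : List D → ℝ) :
    SL t (fun l : List (D × J) => Tacc τ [] l * F (l.map Prod.fst)) = SL t F := by
  induction t generalizing F with
  | zero => simp [SL, Tacc]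
  | succ t ih =>
    rw [SL_snoc, SL_snoc, ← ih]
    refine SL_congr _ _ _ fun l _ => ?_
    simp only [Tacc_snoc, List.nil_append, Fintype.sum_prod_type, List.map_append, List.map_cons,
      List.map_nil, Finset.mul_sum]
    refine Finset.sum_congr rfl fun d _ => ?_
    calc ∑ j, Tacc τ [] l * τ l d j * F (l.map Prod.fst ++ [d])
        = (∑ j, τ l d j) * (Tacc τ [] l * F (l.map Prod.fst ++ [d])) := by
          rw [Finset.sum_mul]; exact Finset.sum_congr rfl fun _ _ => by ring
      _ = _ := by rw [(hτ l d).2, one_mul]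

end Words
end Stmt19

open Set
set_option linter.unusedSectionVars false
set_option linter.unusedVariables false
namespace Stmt19

section Claims
variable {K I J C D : Type*} [Fintype K] [Fintype I] [Fintype J] [Fintype C] [Fintype D]

/-- A family of flows seen as a function on nonempty words. -/
def wd (B : D → List D → K → I → ℝ) : List D → K → I → ℝ
  | [] => fun _ _ => 0
  | d :: h => B d h

lemma wd_nonneg {Q : K → I → K → D → ℝ} {ξ : D → K → ℝ} {B : D → List D → K → I → ℝ}
    (hB : B ∈ Fam Q ξ) (l : List D) (k : K) (i : I) : 0 ≤ wd B l k i := by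
  cases l with
  | nil => exact le_rfl
  | cons d h => exact (mem_Fam.1 hB d).nonneg h k i

lemma wd_root {Q : K → I → K → D → ℝ} {ξ : D → K → ℝ} {B : D → List D → K → I → ℝ}
    (hB : B ∈ Fam Q ξ) (d : D) (k : K) : ∑ i, wd B [d] k i = ξ d k :=
  (mem_Fam.1 hB d).root k

lemma wd_step {Q : K → I → K → D → ℝ} {ξ : D → K → ℝ} {B : D → List D → K → I → ℝ}
    (hB : B ∈ Fam Q ξ) (l : List D) (d d' : D) (k : K) :
    ∑ i, wd B (l ++ [d] ++ [d']) k i = push Q (wd B (l ++ [d])) d' k := by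
  cases l with
  | nil => exact (mem_Fam.1 hB d).step [] d' k
  | cons a l => exact (mem_Fam.1 hB a).step (l ++ [d]) d' k

lemma GG_eq [Nonempty J] (g : K → I → J → ℝ) (t : ℕ) (B : D → List D → K → I → ℝ) :
    GG g t B = SL (t + 1) (fun l => mn g (wd B l)) := rfl

lemma LL_eq [Nonempty J] (g : K → I → J → ℝ) (t : ℕ) (B : D → List D → K → I → ℝ)
    (τ : List D → J → ℝ) :
    LL g t B τ = SL (t + 1) (fun l => ∑ j, τ l j * lin g (wd B l) j) := rfl

lemma sum_marg (p : K × C × D → ℝ) (f : K → D → ℝ) :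
    ∑ y : K × C × D, p y * f y.1 y.2.2 = ∑ d, ∑ k, (∑ c, p (k, c, d)) * f k d := by
  simp only [Fintype.sum_prod_type, Finset.sum_mul]
  rw [Finset.sum_comm' (s := Finset.univ) (t := fun _ => Finset.univ) (t' := Finset.univ)
    (s' := fun _ => Finset.univ) (by simp)]
  rw [Finset.sum_comm]
  refine (Finset.sum_congr rfl fun k _ => Finset.sum_comm).trans ?_
  rw [Finset.sum_comm]

variable {q : K → I → J → (K × C × D → ℝ)} {π : K × C × D → ℝ}
  (hq : ∀ k i j, q k i j ∈ Δ (K × C × D)) (hπ : π ∈ Δ (K × C × D))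
  {kt : C → K} {dt : C → D}
  (hq1 : ∀ (k : K) (i : I) (j : J) (k' : K) (c' : C) (d' : D),
      ¬(kt c' = k' ∧ dt c' = d') → q k i j (k', c', d') = 0)
  (hπ1 : ∀ (k : K) (c : C) (d : D), ¬(kt c = k ∧ dt c = d) → π (k, c, d) = 0)
  {Q : K → I → K → D → ℝ} {ξ : D → K → ℝ}
  (hQ : ∀ k i j k' d', ∑ c, q k i j (k', c, d') = Q k i k' d')
  (hξ : ∀ k d, ∑ c, π (k, c, d) = ξ d k)

lemma EE_flow (hq : ∀ k i j, q k i j ∈ Δ (K × C × D))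
    (hπ : π ∈ Δ (K × C × D))
    (hq1 : ∀ (k : K) (i : I) (j : J) (k' : K) (c' : C) (d' : D), ¬(kt c' = k' ∧ dt c' = d') → q k i j (k', c', d') = 0)
    (hπ1 : ∀ (k : K) (c : C) (d : D), ¬(kt c = k ∧ dt c = d) → π (k, c, d) = 0)
    (hQ : ∀ k i j k' d', ∑ c, q k i j (k', c, d') = Q k i k' d')
    (hξ : ∀ k d, ∑ c, π (k, c, d) = ξ d k)
    {B : D → List D → K → I → ℝ} (hB : B ∈ Fam Q ξ) {s : List D → K → I → ℝ}
    (hs : ∀ l k i, (∑ i, wd B l k i) * s l k i = wd B l k i)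
    {σ : List (C × I) → C → (I → ℝ)} {τ : List (D × J) → D → (J → ℝ)}
    (hσ : IsStrat1 σ) (hτ : IsStrat2 τ)
    (hσs : ∀ h c, σ h c = s (h.map (fun a => dt a.1) ++ [dt c]) (kt c))
    (t : ℕ) (f : K → List (D × J) → D → ℝ) :
    EE q π σ τ t (fun st => f st.1 st.2.2.1 st.2.2.2) =
      SL t (fun l => Tacc τ [] l * ∑ d, ∑ k, (∑ i, wd B (l.map Prod.fst ++ [d]) k i) * f k l d) := by
  induction t generalizing f with
  | zero =>
    rw [EE_zero, sum_marg π (fun k d => f k [] d)]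
    simp [SL, Tacc, hξ, wd_root hB]
  | succ t ih =>
    rw [EE_succ]
    obtain ⟨F, hF⟩ : ∃ F : K → List (D × J) → D → ℝ, F = fun k l d =>
        ∑ i, ∑ j, s (l.map Prod.fst ++ [d]) k i * τ l d j *
          ∑ d', ∑ k', Q k i k' d' * f k' (l ++ [(d, j)]) d' := ⟨_, rfl⟩
    have h1 : EE q π σ τ t (nextE q σ τ fun st => f st.1 st.2.2.1 st.2.2.2) =
        EE q π σ τ t (fun st => F st.1 st.2.2.1 st.2.2.2) := by
      rw [hF]
      refine EE_congr hq hπ hq1 hπ1 hσ hτ t _ _ fun st hst => ?_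
      obtain ⟨h1, h2, h3, h4⟩ := hst
      unfold nextE
      refine Finset.sum_congr rfl fun i _ => Finset.sum_congr rfl fun j _ => ?_
      simp only [mul_assoc]
      rw [← Finset.mul_sum, ← Finset.mul_sum, hσs, h1, h2, h3]
      congr 2
      rw [sum_marg (q st.1 i j) (fun k' d' => f k' (st.2.2.1 ++ [(st.2.2.2, j)]) d')]
      simp only [hQ]
    rw [h1, ih F, SL_snoc, hF]
    refine SL_congr _ _ _ fun l _ => ?_
    simp only [Tacc_snoc, List.nil_append, Fintype.sum_prod_type, List.map_append, List.map_cons,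
      List.map_nil, wd_step hB]
    rw [Finset.mul_sum]
    refine Finset.sum_congr rfl fun d _ => ?_
    set b := wd B (l.map Prod.fst ++ [d]) with hb
    set s' := s (l.map Prod.fst ++ [d]) with hs'
    have hbs : ∀ k i, (∑ i, b k i) * s' k i = b k i := fun k i => hs _ k i
    have h2 : ∀ j, ∑ d', ∑ k', push Q b d' k' * f k' (l ++ [(d, j)]) d' =
        ∑ k, ∑ i, b k i * ∑ d', ∑ k', Q k i k' d' * f k' (l ++ [(d, j)]) d' := by
      intro j
      simp only [push, Finset.sum_mul, Finset.mul_sum, mul_assoc]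
      calc ∑ d', ∑ k', ∑ k, ∑ i, b k i * (Q k i k' d' * f k' (l ++ [(d, j)]) d')
          = ∑ d', ∑ k, ∑ i, ∑ k', b k i * (Q k i k' d' * f k' (l ++ [(d, j)]) d') := by
            refine Finset.sum_congr rfl fun d' _ => ?_
            rw [Finset.sum_comm]
            exact Finset.sum_congr rfl fun k _ => Finset.sum_comm
        _ = _ := by
            rw [Finset.sum_comm]
            exact Finset.sum_congr rfl fun k _ => Finset.sum_comm
    simp only [h2]
    calc Tacc τ [] l * ∑ k, (∑ i, b k i) * ∑ i, ∑ j, s' k i * τ l d j *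
            ∑ d', ∑ k', Q k i k' d' * f k' (l ++ [(d, j)]) d'
        = Tacc τ [] l * ∑ k, ∑ j, ∑ i, τ l d j * (b k i *
            ∑ d', ∑ k', Q k i k' d' * f k' (l ++ [(d, j)]) d') := by
          congr 1
          refine Finset.sum_congr rfl fun k _ => ?_
          rw [Finset.mul_sum, Finset.sum_comm]
          refine Finset.sum_congr rfl fun i _ => ?_
          rw [Finset.mul_sum]
          refine Finset.sum_congr rfl fun j _ => ?_
          rw [← hbs k i]; ring
      _ = _ := by
          rw [Finset.sum_comm, Finset.mul_sum]
          refine Finset.sum_congr rfl fun j _ => ?_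
          simp only [Finset.mul_sum, mul_assoc]

/-- Realization of a family of flows by player 1. -/
lemma claim1 (hq : ∀ k i j, q k i j ∈ Δ (K × C × D))
    (hπ : π ∈ Δ (K × C × D))
    (hq1 : ∀ (k : K) (i : I) (j : J) (k' : K) (c' : C) (d' : D), ¬(kt c' = k' ∧ dt c' = d') → q k i j (k', c', d') = 0)
    (hπ1 : ∀ (k : K) (c : C) (d : D), ¬(kt c = k ∧ dt c = d) → π (k, c, d) = 0)
    (hQ : ∀ k i j k' d', ∑ c, q k i j (k', c, d') = Q k i k' d')
    (hξ : ∀ k d, ∑ c, π (k, c, d) = ξ d k)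
    [Nonempty I] [Nonempty J] {B : D → List D → K → I → ℝ} (hB : B ∈ Fam Q ξ)
    (g : K → I → J → ℝ) :
    ∃ σ : List (C × I) → C → (I → ℝ), IsStrat1 σ ∧
      ∀ τ : List (D × J) → D → (J → ℝ), IsStrat2 τ → ∀ t, GG g t B ≤ stagePay q g π σ τ t := by
  classical
  let s : List D → K → I → ℝ := fun l k i =>
    if ∑ i, wd B l k i = 0 then (Pi.single (Classical.arbitrary I) 1 : I → ℝ) i
      else wd B l k i / ∑ i, wd B l k i
  have hs : ∀ l k i, (∑ i, wd B l k i) * s l k i = wd B l k i := by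
    intro l k i
    by_cases h : ∑ i, wd B l k i = 0
    · rw [h, zero_mul]
      exact ((Finset.sum_eq_zero_iff_of_nonneg fun i _ => wd_nonneg hB l k i).1 h i
        (Finset.mem_univ i)).symm
    · simp only [s, if_neg h]
      field_simp
  have hsΔ : ∀ l k, s l k ∈ Δ I := by
    intro l k
    by_cases h : ∑ i, wd B l k i = 0
    · have : s l k = Pi.single (Classical.arbitrary I) 1 := by funext i; simp [s, h]
      rw [this]
      exact single_mem_stdSimplex ℝ _
    · refine ⟨fun i => ?_, ?_⟩
      · simp only [s, if_neg h]
        exact div_nonneg (wd_nonneg hB l k i) (Finset.sum_nonneg fun i _ => wd_nonneg hB l k i)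
      · simp only [s, if_neg h]
        rw [← Finset.sum_div, div_self h]
  let σ : List (C × I) → C → (I → ℝ) := fun h c => s (h.map (fun a => dt a.1) ++ [dt c]) (kt c)
  have hσ : IsStrat1 σ := fun h c => hsΔ _ _
  refine ⟨σ, hσ, fun τ hτ t => ?_⟩
  obtain ⟨F, hF⟩ : ∃ F : K → List (D × J) → D → ℝ, F = fun k l d => ∑ i, ∑ j,
      s (l.map Prod.fst ++ [d]) k i * τ l d j * g k i j := ⟨_, rfl⟩
  have h1 : stagePay q g π σ τ t = EE q π σ τ t (fun st => F st.1 st.2.2.1 st.2.2.2) := by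
    rw [stagePay_eq, hF]
    refine EE_congr hq hπ hq1 hπ1 hσ hτ t _ _ fun st hst => ?_
    obtain ⟨h1, h2, h3, h4⟩ := hst
    simp only [σ, h1, h2, h3]
  rw [h1, EE_flow hq hπ hq1 hπ1 hQ hξ hB hs hσ hτ (fun _ _ => rfl) t F, GG_eq, SL_snoc, ← SL_Tacc hτ, hF]
  refine SL_mono _ _ _ fun l => mul_le_mul_of_nonneg_left ?_ (Tacc_nonneg hτ [] l)
  refine Finset.sum_le_sum fun d _ => ?_
  set b := wd B (l.map Prod.fst ++ [d]) with hb
  have h2 : ∑ k, (∑ i, b k i) * ∑ i, ∑ j, s (l.map Prod.fst ++ [d]) k i * τ l d j * g k i j =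
      ∑ j, τ l d j * lin g b j := by
    simp only [lin]
    calc _ = ∑ k, ∑ j, ∑ i, τ l d j * (b k i * g k i j) := by
          refine Finset.sum_congr rfl fun k _ => ?_
          rw [Finset.mul_sum, Finset.sum_comm]
          refine Finset.sum_congr rfl fun i _ => ?_
          rw [Finset.mul_sum]
          refine Finset.sum_congr rfl fun j _ => ?_
          rw [hb, ← hs _ k i]; ring
      _ = _ := by
          rw [Finset.sum_comm]
          refine Finset.sum_congr rfl fun j _ => ?_
          simp only [Finset.mul_sum]
  rw [h2]
  calc mn g b = ∑ j, τ l d j * mn g b := by rw [← Finset.sum_mul, (hτ l d).2, one_mul]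
    _ ≤ _ := Finset.sum_le_sum fun j _ => mul_le_mul_of_nonneg_left (mn_le g b j) ((hτ l d).1 j)

/-- Any strategy of player 1 induces a family of flows. -/
lemma claim2 (hq : ∀ k i j, q k i j ∈ Δ (K × C × D))
    (hπ : π ∈ Δ (K × C × D))
    (hq1 : ∀ (k : K) (i : I) (j : J) (k' : K) (c' : C) (d' : D), ¬(kt c' = k' ∧ dt c' = d') → q k i j (k', c', d') = 0)
    (hπ1 : ∀ (k : K) (c : C) (d : D), ¬(kt c = k ∧ dt c = d) → π (k, c, d) = 0)
    (hQ : ∀ k i j k' d', ∑ c, q k i j (k', c, d') = Q k i k' d')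
    (hξ : ∀ k d, ∑ c, π (k, c, d) = ξ d k)
    [Nonempty J] {τ' : List D → J → ℝ} (hτ' : ∀ l, τ' l ∈ stdSimplex ℝ J)
    (g : K → I → J → ℝ) {σ : List (C × I) → C → (I → ℝ)} (hσ : IsStrat1 σ) :
    ∃ B ∈ Fam Q ξ, ∀ t, LL g t B τ' =
      stagePay q g π σ (fun (h : List (D × J)) d => τ' (h.map Prod.fst ++ [d])) t := by
  classical
  set τ : List (D × J) → D → (J → ℝ) := fun h d => τ' (h.map Prod.fst ++ [d]) with hτdef
  have hτ : IsStrat2 τ := fun h d => hτ' _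
  let W : K × (List (C × I) × C) × (List (D × J) × D) → List D :=
    fun st => st.2.2.1.map Prod.fst ++ [st.2.2.2]
  let b : ℕ → List D → K → I → ℝ := fun t l k i => EE q π σ τ t (fun st =>
    if W st = l then (if st.1 = k then σ st.2.1.1 st.2.1.2 i else 0) else 0)
  have hbsum : ∀ t l k, ∑ i, b t l k i = EE q π σ τ t (fun st =>
      if W st = l then (if st.1 = k then 1 else 0) else 0) := by
    intro t l k
    simp only [b]
    rw [← EE_sum]
    congr 1
    funext st
    split_ifs <;> simp [(hσ _ _).2]
  refine ⟨fun d h => b h.length (d :: h), mem_Fam.2 fun d => ⟨fun h k i => ?_, fun k => ?_,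
    fun h d' k => ?_⟩, fun t => ?_⟩
  · refine EE_nonneg hq hπ hq1 hπ1 hσ hτ _ _ fun st => ?_
    split_ifs
    · exact (hσ _ _).1 _
    · exact le_rfl
    · exact le_rfl
  · rw [hbsum]
    simp only [List.length_nil, W]
    rw [EE_zero]
    simp only [List.map_nil, List.nil_append]
    rw [sum_marg π (fun k' d' => if [d'] = [d] then if k' = k then 1 else 0 else 0)]
    simp [hξ]
  · rw [hbsum]
    rw [List.length_append, List.length_singleton, EE_succ]
    simp only [push, b]
    have h1 : ∀ st : K × (List (C × I) × C) × (List (D × J) × D),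
        nextE q σ τ (fun st => if W st = d :: (h ++ [d']) then if st.1 = k then 1 else 0 else 0) st =
        ∑ k', ∑ i, Q k' i k d' * (if W st = d :: h then
          (if st.1 = k' then σ st.2.1.1 st.2.1.2 i else 0) else 0) := by
      intro st
      have hW : ∀ (j : J) (d'' : D), (st.2.2.1 ++ [(st.2.2.2, j)]).map Prod.fst ++ [d''] =
          W st ++ [d''] := by intro j d''; simp [W]
      have e : d :: (h ++ [d']) = (d :: h) ++ [d'] := rfl
      have h2 : ∀ i j, ∑ y : K × C × D, σ st.2.1.1 st.2.1.2 i * τ st.2.2.1 st.2.2.2 j * q st.1 i j y *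
          (if W st ++ [y.2.2] = d :: h ++ [d'] then if y.1 = k then 1 else 0 else 0) =
          τ st.2.2.1 st.2.2.2 j * (σ st.2.1.1 st.2.1.2 i *
            if W st = d :: h then Q st.1 i k d' else 0) := by
        intro i j
        simp only [mul_assoc]
        rw [← Finset.mul_sum, ← Finset.mul_sum]
        rw [sum_marg (q st.1 i j) (fun k'' d'' =>
          if W st ++ [d''] = d :: h ++ [d'] then if k'' = k then 1 else 0 else 0)]
        simp only [hQ]
        rw [mul_left_comm]
        congr 2
        by_cases hc : W st = d :: h
        · simp [hc]
        · rw [if_neg hc]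
          refine Finset.sum_eq_zero fun d'' _ => Finset.sum_eq_zero fun k'' _ => ?_
          rw [if_neg, mul_zero]
          intro h3
          exact hc (List.append_inj_left' h3 rfl)
      unfold nextE
      simp only [W, hW] at h2 ⊢
      simp only [e, h2]
      have h3 : ∀ i, ∑ j, τ st.2.2.1 st.2.2.2 j * (σ st.2.1.1 st.2.1.2 i *
            if st.2.2.1.map Prod.fst ++ [st.2.2.2] = d :: h then Q st.1 i k d' else 0) =
            σ st.2.1.1 st.2.1.2 i *
            if st.2.2.1.map Prod.fst ++ [st.2.2.2] = d :: h then Q st.1 i k d' else 0 := by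
        intro i
        rw [← Finset.sum_mul, (hτ _ _).2, one_mul]
      simp only [h3]
      by_cases hc : st.2.2.1.map Prod.fst ++ [st.2.2.2] = d :: h
      · simp only [hc, if_true]
        rw [Finset.sum_comm]
        refine Finset.sum_congr rfl fun i _ => ?_
        simp [mul_comm]
      · simp [hc]
    have h2 : nextE q σ τ (fun st => if W st = d :: (h ++ [d']) then
        if st.1 = k then 1 else 0 else 0) = fun st => ∑ k', ∑ i, Q k' i k d' *
          (if W st = d :: h then (if st.1 = k' then σ st.2.1.1 st.2.1.2 i else 0) else 0) :=
      funext h1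
    rw [h2, EE_sum]
    refine Finset.sum_congr rfl fun k' _ => ?_
    rw [EE_sum]
    refine Finset.sum_congr rfl fun i _ => ?_
    rw [EE_mul, mul_comm]
  · rw [stagePay_eq]
    have h1 : LL g t (fun d h => b h.length (d :: h)) τ' =
        SL (t + 1) (fun l => ∑ j, τ' l j * lin g (b t l) j) := by
      rw [LL_eq]
      refine SL_congr _ _ _ fun l hl => ?_
      cases l with
      | nil => simp at hl
      | cons d h =>
        have : h.length = t := by simpa using hl
        simp only [wd, this]
    have h2 : ∀ l, ∑ j, τ' l j * lin g (b t l) j = EE q π σ τ t (fun st => if W st = l then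
        ∑ i, ∑ j, σ st.2.1.1 st.2.1.2 i * τ' l j * g st.1 i j else 0) := by
      intro l
      have h3 : ∀ j, τ' l j * lin g (b t l) j = EE q π σ τ t (fun st => ∑ k, ∑ i,
          τ' l j * g k i j * (if W st = l then (if st.1 = k then σ st.2.1.1 st.2.1.2 i else 0) else 0)) := by
        intro j
        rw [EE_sum]
        simp only [lin, Finset.mul_sum]
        refine Finset.sum_congr rfl fun k _ => ?_
        rw [EE_sum]
        refine Finset.sum_congr rfl fun i _ => ?_
        rw [EE_mul]
        simp only [b]
        ring
      simp only [h3]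
      rw [← EE_sum]
      congr 1
      funext st
      by_cases hc : W st = l
      · simp only [hc, if_true]
        rw [Finset.sum_comm' (s := Finset.univ) (t := fun _ => Finset.univ) (t' := Finset.univ)
          (s' := fun _ => Finset.univ) (by simp)]
        rw [Finset.sum_eq_single st.1]
        · rw [Finset.sum_comm]
          refine Finset.sum_congr rfl fun i _ => Finset.sum_congr rfl fun j _ => ?_
          simp only [if_true]; ring
        · intro k _ hk
          refine Finset.sum_eq_zero fun j _ => Finset.sum_eq_zero fun i _ => ?_
          rw [if_neg hk.symm, mul_zero]
        · simp
      · simp [hc]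
    rw [h1]
    simp only [h2]
    rw [← EE_SL]
    refine EE_congr hq hπ hq1 hπ1 hσ hτ t _ _ fun st hst => ?_
    rw [SL_single (t + 1) (W st) (by simp [W, hst.2.2.2])
      (fun l => ∑ i, ∑ j, σ st.2.1.1 st.2.1.2 i * τ' l j * g st.1 i j)]

end Claims
end Stmt19


/-- **Theorem 7 (Renault–Venel).** Every zero-sum repeated game with an informed
controller has a general uniform value: the `θ`-values converge to some `v*(π)` as
`I(θ) → 0`, and for every `ε > 0` there are `α > 0` and strategies `σ*`, `τ*`
guaranteeing `v*(π)` up to `ε` in every game with evaluation `θ` such that `I(θ) ≤ α`. -/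
theorem stmt19 (K I J C D : Type*) [Fintype K] [Fintype I] [Fintype J]
    [Fintype C] [Fintype D] [Nonempty K] [Nonempty I] [Nonempty J]
    [Nonempty C] [Nonempty D]
    (q : K → I → J → (K × C × D → ℝ)) (hq : ∀ k i j, q k i j ∈ Stmt19.Δ (K × C × D))
    (g : K → I → J → ℝ) (hg : ∀ k i j, g k i j ∈ Icc (0:ℝ) 1)
    (π : K × C × D → ℝ) (hπ : π ∈ Stmt19.Δ (K × C × D))
    -- Assumption 1: player 1 always knows the state and player 2's signal
    (kt : C → K) (dt : C → D)
    (hq1 : ∀ (k : K) (i : I) (j : J) (k' : K) (c' : C) (d' : D),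
      ¬(kt c' = k' ∧ dt c' = d') → q k i j (k', c', d') = 0)
    (hπ1 : ∀ (k : K) (c : C) (d : D), ¬(kt c = k ∧ dt c = d) → π (k, c, d) = 0)
    -- Assumption 2: the marginal of the transition on `K × D` does not depend on
    -- player 2's action
    (hq2 : ∀ (k : K) (i : I) (j j' : J) (k' : K) (d' : D),
      ∑ c', q k i j (k', c', d') = ∑ c', q k i j' (k', c', d')) :
    ∃ vstar : ℝ,
      -- general limit value
      (∀ ε > (0:ℝ), ∃ α > (0:ℝ), ∀ θ : ℕ → ℝ, Stmt19.IsEval θ →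
        Stmt19.impatience θ ≤ α →
          |Stmt19.lowVal q g π θ - vstar| ≤ ε ∧ |Stmt19.upVal q g π θ - vstar| ≤ ε) ∧
      -- general uniform value
      (∀ ε > (0:ℝ), ∃ α > (0:ℝ), ∃ σstar τstar,
        Stmt19.IsStrat1 σstar ∧ Stmt19.IsStrat2 τstar ∧
        ∀ θ : ℕ → ℝ, Stmt19.IsEval θ → Stmt19.impatience θ ≤ α →
          (∀ τ, Stmt19.IsStrat2 τ → Stmt19.payoff q g π θ σstar τ ≥ vstar - ε) ∧
          (∀ σ, Stmt19.IsStrat1 σ → Stmt19.payoff q g π θ σ τstar ≤ vstar + ε)) := by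
  classical
  obtain ⟨Q, hQ⟩ : ∃ Q : K → I → K → D → ℝ,
      ∀ k i j k' d', ∑ c, q k i j (k', c, d') = Q k i k' d' :=
    ⟨fun k i k' d' => ∑ c, q k i (Classical.arbitrary J) (k', c, d'),
      fun k i j k' d' => hq2 k i j _ k' d'⟩
  obtain ⟨ξ, hξ⟩ : ∃ ξ : D → K → ℝ, ∀ k d, ∑ c, π (k, c, d) = ξ d k :=
    ⟨fun d k => ∑ c, π (k, c, d), fun k d => rfl⟩
  have hQ0 : ∀ k i k' d, 0 ≤ Q k i k' d := fun k i k' d => by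
    rw [← hQ k i (Classical.arbitrary J)]
    exact Finset.sum_nonneg fun c _ => (hq _ _ _).1 _
  have hξ0 : ∀ d k, 0 ≤ ξ d k := fun d k => by
    rw [← hξ]
    exact Finset.sum_nonneg fun c _ => hπ.1 _
  have hQ1 : ∀ k i, ∑ d, ∑ k', Q k i k' d = 1 := fun k i => by
    have h := Stmt19.sum_marg (q k i (Classical.arbitrary J)) (fun _ _ => (1:ℝ))
    simp only [mul_one, hQ, (hq _ _ _).2] at h
    exact h.symm
  have hξ1 : ∑ d, ∑ k, ξ d k = 1 := by
    have h := Stmt19.sum_marg π (fun _ _ => (1:ℝ))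
    simp only [mul_one, hξ, hπ.2] at h
    exact h.symm
  obtain ⟨v, hv1, hv2⟩ := Stmt19.exists_value hQ0 hQ1 hg hξ0 hξ1
  have core : ∀ ε > (0:ℝ), ∃ α > (0:ℝ), ∃ (σstar : List (C × I) → C → (I → ℝ))
        (τstar : List (D × J) → D → (J → ℝ)),
        Stmt19.IsStrat1 σstar ∧ Stmt19.IsStrat2 τstar ∧
        ∀ θ : ℕ → ℝ, Stmt19.IsEval θ → Stmt19.impatience θ ≤ α →
          (∀ τ, Stmt19.IsStrat2 τ → Stmt19.payoff q g π θ σstar τ ≥ v - ε) ∧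
          (∀ σ, Stmt19.IsStrat1 σ → Stmt19.payoff q g π θ σ τstar ≤ v + ε) := by
    intro ε hε
    obtain ⟨N1, hN1, B, hB, hB1⟩ := Stmt19.player1_windows hQ0 hQ1 hg hξ0 hξ1
      (show 0 < ε / 12 by positivity) (hv2 (ε / 12) (by positivity))
    obtain ⟨n, hn, hn'⟩ := hv1 (ε / 4) (by positivity)
    obtain ⟨N2, hN2, τ', hτ', hτ2⟩ := Stmt19.player2_windows hQ0 hQ1 g hξ0
      (show 0 < ε / 4 by positivity) hn hn'
    obtain ⟨σ, hσ, hσB⟩ := Stmt19.claim1 hq hπ hq1 hπ1 hQ hξ hB g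
    have hN10 : (0:ℝ) < N1 := by exact_mod_cast hN1
    have hN20 : (0:ℝ) < N2 := by exact_mod_cast hN2
    have hτs : Stmt19.IsStrat2 (fun (h : List (D × J)) d => τ' (h.map Prod.fst ++ [d])) :=
      fun h d => hτ' _
    refine ⟨ε / (2 * (N1 + N2)), by positivity, σ,
      fun h d => τ' (h.map Prod.fst ++ [d]), hσ, hτs, fun θ hθ hI => ⟨fun τ hτ => ?_,
        fun σ' hσ' => ?_⟩⟩
    · have h1 := Stmt19.sliding_lower hθ
        (Stmt19.stagePay_mem hq hπ hq1 hπ1 hσ hτ hg) hN1 (c := v - 6 * (ε / 12)) (fun m =>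
          (hB1 m).trans (Finset.sum_le_sum fun r _ => hσB τ hτ (m + r)))
      have h2 : N1 * Stmt19.impatience θ ≤ ε / 2 := by
        refine (mul_le_mul_of_nonneg_left hI hN10.le).trans ?_
        rw [← mul_div_assoc, div_le_div_iff₀ (by positivity) (by positivity)]
        nlinarith [mul_pos hε hN10, mul_pos hε hN20]
      unfold Stmt19.payoff
      linarith
    · obtain ⟨B', hB', hL⟩ := Stmt19.claim2 hq hπ hq1 hπ1 hQ hξ hτ' g hσ'
      have hx := Stmt19.stagePay_mem hq hπ hq1 hπ1 hσ' hτs hg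
      have h1 := Stmt19.sliding_upper hθ hx hN2 (c := v + 2 * (ε / 4)) (fun m => by
          have := hτ2 B' hB' (fun t => by rw [hL]; exact (hx t).1) m
          simpa only [hL] using this)
      have h2 : N2 * Stmt19.impatience θ ≤ ε / 2 := by
        refine (mul_le_mul_of_nonneg_left hI hN20.le).trans ?_
        rw [← mul_div_assoc, div_le_div_iff₀ (by positivity) (by positivity)]
        nlinarith [mul_pos hε hN10, mul_pos hε hN20]
      unfold Stmt19.payoff
      linarith
  refine ⟨v, fun ε hε => ?_, core⟩
  obtain ⟨α, hα, σs, τs, hσs, hτs, h⟩ := core ε hε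
  refine ⟨α, hα, fun θ hθ hI => ?_⟩
  obtain ⟨hlo, hup⟩ := h θ hθ hI
  have hpay : ∀ σ τ, Stmt19.IsStrat1 σ → Stmt19.IsStrat2 τ →
      0 ≤ Stmt19.payoff q g π θ σ τ ∧ Stmt19.payoff q g π θ σ τ ≤ 1 := by
    intro σ τ hσ hτ
    have hx := Stmt19.stagePay_mem hq hπ hq1 hπ1 hσ hτ hg
    refine ⟨tsum_nonneg fun t => mul_nonneg (hθ.1 t) (hx t).1, ?_⟩
    rw [← hθ.2]
    have hle : ∀ t, θ t * Stmt19.stagePay q g π σ τ t ≤ θ t := fun t =>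
      mul_le_of_le_one_right (hθ.1 t) (hx t).2
    exact Summable.tsum_le_tsum hle (hθ.summable.of_nonneg_of_le
      (fun t => mul_nonneg (hθ.1 t) (hx t).1) hle) hθ.summable
  constructor
  · have hA : ∀ c ∈ {c : ℝ | ∃ σ, Stmt19.IsStrat1 σ ∧
        c = sInf {r : ℝ | ∃ τ, Stmt19.IsStrat2 τ ∧ r = Stmt19.payoff q g π θ σ τ}}, c ≤ v + ε := by
      rintro c ⟨σ, hσ, rfl⟩
      refine le_trans (csInf_le ⟨0, ?_⟩ ⟨τs, hτs, rfl⟩) (hup σ hσ)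
      rintro r ⟨τ, hτ, rfl⟩
      exact (hpay σ τ hσ hτ).1
    have h1 : Stmt19.lowVal q g π θ ≤ v + ε := csSup_le ⟨_, σs, hσs, rfl⟩ hA
    have h2 : v - ε ≤ Stmt19.lowVal q g π θ := by
      refine le_trans ?_ (le_csSup ⟨_, hA⟩ ⟨σs, hσs, rfl⟩)
      refine le_csInf ⟨_, τs, hτs, rfl⟩ ?_
      rintro r ⟨τ, hτ, rfl⟩
      exact hlo τ hτ
    rw [abs_le]
    constructor <;> linarith
  · have hA : ∀ c ∈ {c : ℝ | ∃ τ, Stmt19.IsStrat2 τ ∧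
        c = sSup {r : ℝ | ∃ σ, Stmt19.IsStrat1 σ ∧ r = Stmt19.payoff q g π θ σ τ}}, v - ε ≤ c := by
      rintro c ⟨τ, hτ, rfl⟩
      refine le_trans (hlo τ hτ) (le_csSup ⟨1, ?_⟩ ⟨σs, hσs, rfl⟩)
      rintro r ⟨σ, hσ, rfl⟩
      exact (hpay σ τ hσ hτ).2
    have h1 : v - ε ≤ Stmt19.upVal q g π θ := le_csInf ⟨_, τs, hτs, rfl⟩ hA
    have h2 : Stmt19.upVal q g π θ ≤ v + ε := by
      refine le_trans (csInf_le ⟨_, hA⟩ ⟨τs, hτs, rfl⟩) ?_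
      refine csSup_le ⟨_, σs, hσs, rfl⟩ ?_
      rintro r ⟨σ, hσ, rfl⟩
      exact hup σ hσ
    rw [abs_le]
    constructor <;> linarith
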